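/- arXiv:1705.04912 — 9 statements merged into one kernel-verified Lean document; each statement's English description precedes it below -/
import Mathlib

section
/- Let a, b, r be integers with r ≥ 1 and let G = G^{(a,b,r,1)}. Then the leading principal minor of order n+1 of the Toeplitz matrix T_{G̃,G} satisfies: det T_{G̃,G}(0) = a, and for every n ≥ 1, det T_{G̃,G}(n) = (2b − a·r)^{n−1} · (a·G_{n−1} + b·G_n). -/
/-- The generalized Fibonacci (Gibonacci) sequence `G^{(a,b,r,1)}`:
`G 0 = a`, `G 1 = b`, `G n = r * G (n-1) + G (n-2)`. -/
def gib (a b r : ℤ) : ℕ → ℤ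
  | 0 => a
  | 1 => b
  | n + 2 => r * gib a b r (n + 1) + gib a b r n

/-- The Toeplitz matrix `T_{α,β}(n)` of order `n+1`: entry `(i,j)` is `α (i-j)` if `i ≥ j`
and `β (j-i)` if `i ≤ j` (consistent when `α 0 = β 0`). -/
def toeplitzM (α β : ℕ → ℤ) (n : ℕ) : Matrix (Fin (n + 1)) (Fin (n + 1)) ℤ :=
  Matrix.of fun i j => if (j : ℕ) ≤ (i : ℕ) then α ((i : ℕ) - (j : ℕ)) else β ((j : ℕ) - (i : ℕ))

/-!
In a Toeplitz matrix whose sequences obey a second-order linear recurrence, each column from the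
third on, minus the prescribed combination of its two predecessors, is a constant `d` times the
unit vector supported on the first superdiagonal. Applied to the last column, this deletes that
column together with the row before the last one, at the cost of a factor `-d`, and the remaining
columns satisfy the same relation. Iterating leaves a `2 × 2` determinant built from the first and
last rows.
-/

section Determinant

open Matrix

variable {R : Type*} [CommRing R]

lemma det_mul_apply_of_mulVec_eq_single {ι : Type*} [Fintype ι] [DecidableEq ι]
    {A : Matrix ι ι R} {v : ι → R} {p : ι} {d : R} (h : A *ᵥ v = Pi.single p d) (l : ι) :
    A.det * v l = A.adjugate l p * d := by
  have hl := congrFun (congrArg (A.adjugate *ᵥ ·) h) l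
  simpa [mulVec_mulVec, adjugate_mul, smul_mulVec] using hl

lemma det_eq_neg_mul_det_submatrix_of_col_recurrence {n : ℕ}
    {A : Matrix (Fin (n + 3)) (Fin (n + 3)) R} {r s d : R}
    (hA : ∀ i, A i (Fin.last n).succ.succ - r * A i (Fin.last n).succ.castSucc
        - s * A i (Fin.last n).castSucc.castSucc =
      if i = (Fin.last n).succ.castSucc then d else 0) :
    A.det = -d * (A.submatrix (Fin.last n).succ.castSucc.succAbove Fin.castSucc).det := by
  let v : Fin (n + 3) → R := Pi.single (Fin.last n).succ.succ 1
    - r • Pi.single (Fin.last n).succ.castSucc 1 - s • Pi.single (Fin.last n).castSucc.castSucc 1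
  have hv : A *ᵥ v = Pi.single (Fin.last n).succ.castSucc d := by
    ext i
    simpa [v, mulVec_sub, mulVec_smul, Pi.single_apply] using hA i
  have hv_last : v (Fin.last (n + 2)) = 1 := by
    simp [v, Fin.ext_iff]
  have hdet := det_mul_apply_of_mulVec_eq_single hv (Fin.last (n + 2))
  have hsign : (-1 : R) ^ (n + 1 + (n + 2)) = -1 := Odd.neg_one_pow ⟨n + 1, by ring⟩
  rw [hv_last, mul_one, adjugate_fin_succ_eq_det_submatrix, Fin.succAbove_last] at hdet
  simp only [Fin.val_castSucc, Fin.val_succ, Fin.val_last, hsign] at hdet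
  rw [hdet]
  ring

theorem det_of_col_recurrence {n : ℕ} {A : Matrix (Fin (n + 2)) (Fin (n + 2)) R} {r s d : R}
    (hA : ∀ i (j : Fin n), A i j.succ.succ - r * A i j.succ.castSucc - s * A i j.castSucc.castSucc =
      if i = j.succ.castSucc then d else 0) :
    A.det = (-d) ^ n * (A 0 0 * A (Fin.last _) 1 - A 0 1 * A (Fin.last _) 0) := by
  induction n with
  | zero => simp [det_fin_two]
  | succ n ih =>
    let p : Fin (n + 3) := (Fin.last n).succ.castSucc
    have hp_last : p.succAbove (Fin.last _) = Fin.last _ :=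
      Fin.succAbove_ne_last_last (Fin.castSucc_lt_last _).ne
    have hp_zero : p.succAbove 0 = 0 := Fin.succAbove_ne_zero_zero (by simp [p, Fin.ext_iff])
    have hminor (i : Fin (n + 2)) (j : Fin n) :
        A (p.succAbove i) j.succ.succ.castSucc - r * A (p.succAbove i) j.succ.castSucc.castSucc
          - s * A (p.succAbove i) j.castSucc.castSucc.castSucc =
        if i = j.succ.castSucc then d else 0 := by
      have hp : p.succAbove j.succ.castSucc = j.castSucc.succ.castSucc :=
        Fin.succAbove_of_castSucc_lt _ _ (by simp [p, Fin.lt_def])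
      have hij : p.succAbove i = j.castSucc.succ.castSucc ↔ i = j.succ.castSucc := by
        rw [← hp, Fin.succAbove_right_inj]
      simpa only [hij] using! hA (p.succAbove i) j.castSucc
    rw [det_eq_neg_mul_det_submatrix_of_col_recurrence fun i => hA i (Fin.last n), ih hminor]
    simp only [submatrix_apply, p, hp_last, hp_zero, Fin.castSucc_zero, Fin.castSucc_one]
    ring

end Determinant

section Toeplitz

/-- The infinite Toeplitz matrix `T_{α,β}` over an arbitrary type of coefficients; over `ℤ`, its
leading principal submatrix of order `n + 1` is `toeplitzM α β n` definitionally. -/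
def toeplitz {S : Type*} (α β : ℕ → S) : Matrix ℕ ℕ S :=
  Matrix.of fun i j => if j ≤ i then α (i - j) else β (j - i)

lemma toeplitz_of_row_eq_col_add {S : Type*} {α β : ℕ → S} {i j k : ℕ} (hij : i = j + k) :
    toeplitz α β i j = α k := by
  simp [toeplitz, hij]

lemma toeplitz_of_col_eq_row_add {S : Type*} {α β : ℕ → S} (h : α 0 = β 0) {i j k : ℕ}
    (hij : j = i + k) : toeplitz α β i j = β k := by
  cases k <;> simp [toeplitz, h, hij]

variable {R : Type*} [CommRing R] {α β : ℕ → R} {r s : R}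

lemma toeplitz_col_recurrence (h : α 0 = β 0) (hα : ∀ k, α k = r * α (k + 1) + s * α (k + 2))
    (hβ : ∀ k, β (k + 2) = r * β (k + 1) + s * β k) (i j : ℕ) :
    toeplitz α β i (j + 2) - r * toeplitz α β i (j + 1) - s * toeplitz α β i j =
      if i = j + 1 then β 1 - r * α 0 - s * α 1 else 0 := by
  rcases Nat.lt_trichotomy i (j + 1) with hij | rfl | hij
  · obtain ⟨k, rfl⟩ := Nat.exists_eq_add_of_le (Nat.lt_succ_iff.mp hij)
    rw [if_neg hij.ne, toeplitz_of_col_eq_row_add h (add_assoc i k 2),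
      toeplitz_of_col_eq_row_add h (add_assoc i k 1), toeplitz_of_col_eq_row_add h rfl, hβ k]
    ring
  · rw [if_pos rfl, toeplitz_of_col_eq_row_add h (k := 1) rfl,
      toeplitz_of_row_eq_col_add (k := 0) rfl, toeplitz_of_row_eq_col_add (k := 1) rfl]
  · obtain ⟨k, rfl⟩ := Nat.exists_eq_add_of_le (Nat.succ_le_of_lt hij)
    rw [if_neg hij.ne', toeplitz_of_row_eq_col_add (k := k) rfl,
      toeplitz_of_row_eq_col_add (k := k + 1) (by lia),
      toeplitz_of_row_eq_col_add (k := k + 2) (by lia), hα k]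
    ring

theorem det_toeplitz_of_recurrence (h : α 0 = β 0)
    (hα : ∀ k, α k = r * α (k + 1) + s * α (k + 2))
    (hβ : ∀ k, β (k + 2) = r * β (k + 1) + s * β k) (n : ℕ) :
    ((toeplitz α β).submatrix ((↑) : Fin (n + 2) → ℕ) (↑)).det =
      (-(β 1 - r * α 0 - s * α 1)) ^ n * (α 0 * α n - β 1 * α (n + 1)) := by
  rw [det_of_col_recurrence (r := r) (s := s) (d := β 1 - r * α 0 - s * α 1)]
  · simp [toeplitz]
  · intro i j
    simpa [Fin.ext_iff] using toeplitz_col_recurrence h hα hβ i j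

theorem det_toeplitz_gib_general (G : ℕ → R) (hG : ∀ n, G (n + 2) = r * G (n + 1) + G n) :
    ((toeplitz (fun i => (-1) ^ i * G i) G).submatrix ((↑) : Fin 1 → ℕ) (↑)).det = G 0 ∧
    ∀ n : ℕ, 1 ≤ n →
      ((toeplitz (fun i => (-1) ^ i * G i) G).submatrix ((↑) : Fin (n + 1) → ℕ) (↑)).det =
        (2 * G 1 - G 0 * r) ^ (n - 1) * (G 0 * G (n - 1) + G 1 * G n) := by
  refine ⟨by simp [toeplitz], fun n hn => ?_⟩
  obtain ⟨m, rfl⟩ := Nat.exists_eq_add_of_le' hn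
  have hα (k : ℕ) :
      (-1) ^ k * G k = r * ((-1) ^ (k + 1) * G (k + 1)) + 1 * ((-1) ^ (k + 2) * G (k + 2)) := by
    rw [hG]
    ring
  have hβ (k : ℕ) : G (k + 2) = r * G (k + 1) + 1 * G k := by rw [hG, one_mul]
  rw [det_toeplitz_of_recurrence (by simp) hα hβ, Nat.add_sub_cancel]
  calc (-(G 1 - r * ((-1) ^ 0 * G 0) - 1 * ((-1) ^ 1 * G 1))) ^ m *
        ((-1) ^ 0 * G 0 * ((-1) ^ m * G m) - G 1 * ((-1) ^ (m + 1) * G (m + 1)))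
    _ = (-(2 * G 1 - G 0 * r)) ^ m * ((-1) ^ m * (G 0 * G m + G 1 * G (m + 1))) := by ring
    _ = (2 * G 1 - G 0 * r) ^ m * (G 0 * G m + G 1 * G (m + 1)) := by
      rw [← mul_assoc, ← mul_pow, mul_neg_one, neg_neg]

end Toeplitz

/-- Theorem 3.1: for `G = G^{(a,b,r,1)}` with `r ≥ 1`, the leading principal minors of
`T_{G̃,G}` satisfy `det T(0) = a` and `det T(n) = (2b - ar)^(n-1) (a G_{n-1} + b G_n)` for `n ≥ 1`. -/
theorem det_toeplitz_gib (a b r : ℤ) (hr : 1 ≤ r) :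
    (toeplitzM (fun i => (-1) ^ i * gib a b r i) (gib a b r) 0).det = a ∧
    ∀ n : ℕ, 1 ≤ n →
      (toeplitzM (fun i => (-1) ^ i * gib a b r i) (gib a b r) n).det =
        (2 * b - a * r) ^ (n - 1) * (a * gib a b r (n - 1) + b * gib a b r n) := by
  exact det_toeplitz_gib_general (gib a b r) fun _ => rfl
end

section
/- Let m ≥ 0 be an integer and let α be the sequence α_i = F_{m+i}. Then for every n ≥ 1, det T_{α̃,α}(n) = L_m^{n−1} · F_{2m+n}, where L_m = F_{m+1} + F_{m−1} is the m-th Lucas number (for m = 0 one has L_0 = 2, so det T_{F̃,F}(n) = 2^{n−1}·F_n). -/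
/-- The Fibonacci sequence (as integers): `F 0 = 0`, `F 1 = 1`, `F n = F (n-1) + F (n-2)`. -/
def fibZ : ℕ → ℤ
  | 0 => 0
  | 1 => 1
  | n + 2 => fibZ (n + 1) + fibZ n

/-- The Lucas sequence: `L 0 = 2`, `L 1 = 1`, `L n = L (n-1) + L (n-2)`. -/
def lucasZ : ℕ → ℤ
  | 0 => 2
  | 1 => 1
  | n + 2 => lucasZ (n + 1) + lucasZ n

/-!
Let `u (i + 2) = p * u (i + 1) + u i`. Above the diagonal `T_{ũ,u}` carries `u`, below it `ũ`, and
since the recurrence has trailing coefficient `1`, both satisfy the same relation down a column: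
row `i + 2` is row `i` minus `p` times row `i + 1`. The two branches agree on the diagonal but do
not continue each other, so the relation fails in exactly one column, `i + 1`, with defect
`-(2 * u 1 - p * u 0)`. Modulo earlier rows, each row from the third on thus has a single nonzero
entry, and Laplace expansion leaves only the `2 × 2` minor of the first two rows and the outer
columns. For `u i = F (m + i)` the defect is `-L m`, and the minor is `F (2 * m + n)` by the
addition formula.
-/

theorem det_updateRow_eq_zero_of_mem_span {ι R : Type*} [Fintype ι] [DecidableEq ι] [CommRing R]
    (A : Matrix ι ι R) {i : ι} {v : ι → R} (hv : v ∈ Submodule.span R (A '' {i}ᶜ)) :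
    (A.updateRow i v).det = 0 := by
  induction hv using Submodule.span_induction with
  | mem _ hx =>
    obtain ⟨r, hr, rfl⟩ := hx
    exact Matrix.det_updateRow_eq_zero hr
  | zero => exact Matrix.det_eq_zero_of_row_eq_zero i fun j => by simp
  | add x y _ _ hx hy => rw [Matrix.det_updateRow_add, hx, hy, add_zero]
  | smul a x _ hx => rw [Matrix.det_updateRow_smul, hx, mul_zero]

section RowRecurrence

variable {R : Type*} [CommRing R] {n : ℕ}

theorem det_of_row_eq_add_single {A : Matrix (Fin (n + 1)) (Fin (n + 1)) R}
    {i k : Fin (n + 1)} {v : Fin (n + 1) → R} {c : R}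
    (hv : v ∈ Submodule.span R (A '' {i}ᶜ)) (hA : A i = v + Pi.single k c) :
    A.det = (-1) ^ (i + k : ℕ) * c * (A.submatrix i.succAbove k.succAbove).det := by
  calc A.det
      = (A.updateRow i (v + c • Pi.single k 1)).det := by
        rw [← Pi.single_smul, smul_eq_mul, mul_one, ← hA, Matrix.updateRow_eq_self]
    _ = c * A.adjugate k i := by
        rw [Matrix.det_updateRow_add, det_updateRow_eq_zero_of_mem_span A hv, zero_add,
          Matrix.det_updateRow_smul, Matrix.adjugate_apply]
    _ = _ := by rw [Matrix.adjugate_fin_succ_eq_det_submatrix]; ring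

theorem det_of_row_recurrence {A : Matrix (Fin (n + 2)) (Fin (n + 2)) R} {p q c : Fin n → R}
    (hA : ∀ i : Fin n, A i.succ.succ =
      p i • A i.succ.castSucc + q i • A i.castSucc.castSucc + Pi.single i.succ.castSucc (c i)) :
    A.det = (∏ i, -c i) * (A 0 0 * A 1 (Fin.last _) - A 0 (Fin.last _) * A 1 0) := by
  induction n with
  | zero => simp [Matrix.det_fin_two]
  | succ n ih =>
    let k : Fin (n + 3) := (Fin.last (n + 1)).castSucc
    let B := A.submatrix Fin.castSucc k.succAbove
    have det_A : A.det = -c (Fin.last n) * B.det := by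
      have row_mem (r : Fin (n + 2)) : A r.castSucc ∈ Submodule.span R (A '' {Fin.last _}ᶜ) :=
        Submodule.subset_span ⟨_, r.castSucc_ne_last, rfl⟩
      have hv := add_mem (Submodule.smul_mem _ (p (Fin.last n)) (row_mem (Fin.last n).succ))
        (Submodule.smul_mem _ (q (Fin.last n)) (row_mem (Fin.last n).castSucc))
      have sign : (-1 : R) ^ (n + 2 + (n + 1)) = -1 := Odd.neg_one_pow ⟨n + 1, by ring⟩
      exact (det_of_row_eq_add_single (k := k) hv (hA (Fin.last n))).trans (by simp [sign, B, k])
    have hB (i : Fin n) : B i.succ.succ = p i.castSucc • B i.succ.castSucc +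
        q i.castSucc • B i.castSucc.castSucc + Pi.single i.succ.castSucc (c i.castSucc) := by
      have hk : k.succAbove i.succ.castSucc = i.castSucc.succ.castSucc :=
        Fin.succAbove_of_castSucc_lt _ _ (by simp [k, Fin.lt_def])
      ext j
      have single_minor : Pi.single (M := fun _ => R) i.castSucc.succ.castSucc (c i.castSucc)
          (k.succAbove j) = Pi.single (M := fun _ => R) i.succ.castSucc (c i.castSucc) j := by
        simp only [← hk, Pi.single_apply, Fin.succAbove_right_inj]
      exact (congrFun (hA i.castSucc) (k.succAbove j)).trans (congrArg (_ + ·) single_minor)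
    have k_zero : k.succAbove 0 = 0 := Fin.succAbove_ne_zero_zero (by simp [k, Fin.ext_iff])
    have k_last : k.succAbove (Fin.last _) = Fin.last _ := by simp [k]
    rw [det_A, ih hB, Fin.prod_univ_castSucc]
    simp only [B, Matrix.submatrix_apply, k_zero, k_last, Fin.castSucc_zero, Fin.castSucc_one]
    ring

end RowRecurrence

section Toeplitz

variable {α β : ℕ → ℤ} {n d : ℕ} {i j : Fin (n + 1)}

theorem toeplitzM_apply_of_eq_add_left (h : (i : ℕ) = j + d) : toeplitzM α β n i j = α d := by
  simp [toeplitzM, h, -Fin.val_fin_le]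

theorem toeplitzM_apply_of_eq_add_right (h₀ : α 0 = β 0) (h : (j : ℕ) = i + d) :
    toeplitzM α β n i j = β d := by
  cases d with
  | zero => simp [toeplitzM, h, h₀]
  | succ d => simp [toeplitzM, h, -Fin.val_fin_le]

end Toeplitz

section FibRecurrence

variable {p : ℤ} {u : ℕ → ℤ}

theorem toeplitzM_row_recurrence (hu : ∀ i, u (i + 2) = p * u (i + 1) + u i) (n : ℕ)
    (i : Fin n) :
    toeplitzM (fun k => (-1) ^ k * u k) u (n + 1) i.succ.succ =
      (-p) • toeplitzM (fun k => (-1) ^ k * u k) u (n + 1) i.succ.castSucc +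
        (1 : ℤ) • toeplitzM (fun k => (-1) ^ k * u k) u (n + 1) i.castSucc.castSucc +
        Pi.single i.succ.castSucc (-(2 * u 1 - p * u 0)) := by
  have h₀ : (-1) ^ 0 * u 0 = u 0 := by ring
  ext j
  simp only [Pi.add_apply, Pi.smul_apply, smul_eq_mul]
  obtain hj | hj | hj : (j : ℕ) ≤ i ∨ j = i.succ.castSucc ∨ (i : ℕ) + 2 ≤ j := by
    simp only [Fin.ext_iff, Fin.val_castSucc, Fin.val_succ]; omega
  · obtain ⟨d, hd⟩ := Nat.exists_eq_add_of_le hj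
    rw [toeplitzM_apply_of_eq_add_left (d := d + 2) (by simp; omega),
      toeplitzM_apply_of_eq_add_left (d := d + 1) (by simp; omega),
      toeplitzM_apply_of_eq_add_left (d := d) (by simp; omega),
      Pi.single_eq_of_ne (by simp [Fin.ext_iff]; omega), hu]
    ring
  · subst hj
    rw [toeplitzM_apply_of_eq_add_left (d := 1) (by simp),
      toeplitzM_apply_of_eq_add_left (d := 0) (by simp),
      toeplitzM_apply_of_eq_add_right h₀ (d := 1) (by simp), Pi.single_eq_same]
    ring
  · obtain ⟨d, hd⟩ := Nat.exists_eq_add_of_le hj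
    rw [toeplitzM_apply_of_eq_add_right h₀ (d := d) (by simp; omega),
      toeplitzM_apply_of_eq_add_right h₀ (d := d + 1) (by simp; omega),
      toeplitzM_apply_of_eq_add_right h₀ (d := d + 2) (by simp; omega),
      Pi.single_eq_of_ne (by simp [Fin.ext_iff]; omega), hu]
    ring

theorem det_toeplitz_fib_shift_general (hu : ∀ i, u (i + 2) = p * u (i + 1) + u i) (n : ℕ) :
    (toeplitzM (fun k => (-1) ^ k * u k) u (n + 1)).det =
      (2 * u 1 - p * u 0) ^ n * (u 0 * u n + u 1 * u (n + 1)) := by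
  have h₀ : (-1) ^ 0 * u 0 = u 0 := by ring
  rw [det_of_row_recurrence (toeplitzM_row_recurrence hu n),
    toeplitzM_apply_of_eq_add_right h₀ (d := 0) (by simp),
    toeplitzM_apply_of_eq_add_right h₀ (d := n) (by rw [Fin.val_last, Fin.val_one, add_comm]),
    toeplitzM_apply_of_eq_add_right h₀ (d := n + 1) (by simp),
    toeplitzM_apply_of_eq_add_left (d := 1) rfl, Fin.prod_const]
  ring

end FibRecurrence

theorem fibZ_eq_fib (n : ℕ) : fibZ n = Nat.fib n := by
  induction n using Nat.twoStepInduction with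
  | zero => simp [fibZ]
  | one => simp [fibZ]
  | more n h₀ h₁ => rw [fibZ, h₀, h₁, Nat.fib_add_two, Nat.cast_add, add_comm]

theorem fibZ_add (m n : ℕ) :
    fibZ (m + n + 1) = fibZ m * fibZ n + fibZ (m + 1) * fibZ (n + 1) := by
  simp only [fibZ_eq_fib, Nat.fib_add]
  push_cast
  rfl

theorem lucasZ_eq_two_mul_fibZ_sub (n : ℕ) : lucasZ n = 2 * fibZ (n + 1) - fibZ n := by
  induction n using Nat.twoStepInduction with
  | zero => simp [fibZ, lucasZ]
  | one => simp [fibZ, lucasZ]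
  | more n h₀ h₁ =>
    rw [lucasZ, h₀, h₁]
    simp only [fibZ]
    ring

/-- Corollary 3.2: for `α_i = F_{m+i}` and every `n ≥ 1`,
`det T_{α̃,α}(n) = L_m^(n-1) * F_{2m+n}`. -/
theorem det_toeplitz_fib_shift (m : ℕ) (n : ℕ) (hn : 1 ≤ n) :
    (toeplitzM (fun i => (-1) ^ i * fibZ (m + i)) (fun i => fibZ (m + i)) n).det =
      lucasZ m ^ (n - 1) * fibZ (2 * m + n) := by
  obtain ⟨n, rfl⟩ := Nat.exists_eq_add_of_le' hn
  rw [det_toeplitz_fib_shift_general (p := 1) (u := fun i => fibZ (m + i))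
    (fun i => by rw [one_mul]; rfl), lucasZ_eq_two_mul_fibZ_sub, add_tsub_cancel_right, one_mul,
    show 2 * m + (n + 1) = m + (m + n) + 1 by ring, fibZ_add]
  rfl
end

section
/- Let m ≥ 1 be an integer and let α be the sequence α_i = P_{m+i}, where P is the Pell sequence. Then for every n ≥ 1, det T_{α̃,α}(n) = (P_{m−1} + P_{m+1})^{n−1} · P_{2m+n}. Moreover, for m = 0 (so α = P), det T_{P̃,P}(n) = 2^{n−1}·P_n for every n ≥ 1. -/
/-- The Pell sequence: `P 0 = 0`, `P 1 = 1`, `P n = 2 * P (n-1) + P (n-2)`. -/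
def pellZ : ℕ → ℤ
  | 0 => 0
  | 1 => 1
  | n + 2 => 2 * pellZ (n + 1) + pellZ n

/-!
Subtracting `p` times row `1` and `q` times row `2` from row `0` of a Toeplitz matrix whose
diagonals satisfy `t k = p * t (k + 1) + q * t (k + 2)` for every `k ≠ -1` leaves a single nonzero
entry, in column `1`. Expanding there deletes row `0` and column `1`, which keeps all columns but
the first Toeplitz and shifts the first one up by one row. Repeating this peels off the factor
`p * t 0 + q * t 1 - t (-1)` until a `2 × 2` determinant is left. A shifted Pell sequence fits with
`p = 2` and `q = 1`, because alternating its signs reverses the direction of the recurrence, and the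
`2 × 2` determinant is then a Pell number by the addition formula.
-/

section BorderedToeplitz

variable {R : Type*}

/-- The Toeplitz matrix with `(i, j)`-entry `t (i - j)` whose column `0` is replaced by `g`. Unlike
Toeplitz matrices themselves, this family is closed under deleting row `0` and column `1`. -/
def borderedToeplitz (g : ℕ → R) (t : ℤ → R) (n : ℕ) :
    Matrix (Fin (n + 1)) (Fin (n + 1)) R :=
  Matrix.of fun i ↦ Fin.cons (g i) fun j : Fin n ↦ t (i - (j + 1))

lemma borderedToeplitz_apply_zero (g : ℕ → R) (t : ℤ → R) (n : ℕ) (i : Fin (n + 1)) :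
    borderedToeplitz g t n i 0 = g i :=
  rfl

lemma borderedToeplitz_apply_succ (g : ℕ → R) (t : ℤ → R) {n : ℕ} (i : Fin (n + 1))
    (j : Fin n) : borderedToeplitz g t n i j.succ = t (i - (j + 1)) :=
  rfl

lemma borderedToeplitz_submatrix_succ_succAbove_one (g : ℕ → R) (t : ℤ → R) (n : ℕ) :
    (borderedToeplitz g t (n + 1)).submatrix Fin.succ (Fin.succAbove 1) =
      borderedToeplitz (fun i ↦ g (i + 1)) t n := by
  ext i j
  cases j using Fin.cases <;> simp [borderedToeplitz]

variable [CommRing R]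

lemma borderedToeplitz_row_zero {g : ℕ → R} {t : ℤ → R} {p q : R}
    (hg : g 0 = p * g 1 + q * g 2)
    (ht : ∀ k < -1, t k = p * t (k + 1) + q * t (k + 2)) (n : ℕ) :
    borderedToeplitz g t (n + 2) 0 =
      p • borderedToeplitz g t (n + 2) 1 + q • borderedToeplitz g t (n + 2) 2 +
        (t (-1) - p * t 0 - q * t 1) • Pi.single 1 1 := by
  have val_two : ((2 : Fin (n + 3)) : ℕ) = 2 := rfl
  ext j
  simp only [Pi.add_apply, Pi.smul_apply, smul_eq_mul]
  cases j using Fin.cases with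
  | zero =>
    rw [Pi.single_eq_of_ne zero_ne_one, mul_zero, add_zero]
    exact hg
  | succ j =>
    simp only [borderedToeplitz_apply_succ, Fin.val_zero, Fin.val_one, val_two]
    cases j using Fin.cases with
    | zero =>
      rw [Fin.succ_zero_eq_one, Pi.single_eq_same]
      norm_num
    | succ j =>
      have column_ne_one : j.succ.succ ≠ 1 := (Fin.succ_injective _).ne (Fin.succ_ne_zero j)
      rw [Pi.single_eq_of_ne column_ne_one, mul_zero, add_zero]
      convert ht (-(j + 2)) (by lia) using 3 <;> grind

lemma det_borderedToeplitz_succ {g : ℕ → R} {t : ℤ → R} {p q : R}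
    (hg : g 0 = p * g 1 + q * g 2)
    (ht : ∀ k < -1, t k = p * t (k + 1) + q * t (k + 2)) (n : ℕ) :
    (borderedToeplitz g t (n + 2)).det =
      (p * t 0 + q * t 1 - t (-1)) * (borderedToeplitz (fun i ↦ g (i + 1)) t (n + 1)).det := by
  set M := borderedToeplitz g t (n + 2)
  set c := t (-1) - p * t 0 - q * t 1 with hc
  have two_ne_zero : (2 : Fin (n + 3)) ≠ 0 := Fin.ne_of_val_ne (by decide : 2 ≠ 0)
  have adjugate_eq : M.adjugate 1 0 = -(borderedToeplitz (fun i ↦ g (i + 1)) t (n + 1)).det := by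
    rw [Matrix.adjugate_fin_succ_eq_det_submatrix, Fin.succAbove_zero,
      borderedToeplitz_submatrix_succ_succAbove_one]
    simp
  calc M.det = (M.updateRow 0 (p • M 1 + q • M 2 + c • Pi.single 1 1)).det := by
        rw [← borderedToeplitz_row_zero hg ht, Matrix.updateRow_eq_self]
    _ = c * M.adjugate 1 0 := by
        simp only [Matrix.det_updateRow_add, Matrix.det_updateRow_smul,
          Matrix.det_updateRow_eq_zero one_ne_zero, Matrix.det_updateRow_eq_zero two_ne_zero,
          Matrix.adjugate_apply, mul_zero, zero_add]
    _ = (p * t 0 + q * t 1 - t (-1)) *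
          (borderedToeplitz (fun i ↦ g (i + 1)) t (n + 1)).det := by
        rw [adjugate_eq, hc]
        ring

theorem det_borderedToeplitz {g : ℕ → R} {t : ℤ → R} {p q : R}
    (hg : ∀ i, g i = p * g (i + 1) + q * g (i + 2))
    (ht : ∀ k < -1, t k = p * t (k + 1) + q * t (k + 2)) (n : ℕ) :
    (borderedToeplitz g t (n + 1)).det =
      (p * t 0 + q * t 1 - t (-1)) ^ n * (g n * t 0 - g (n + 1) * t (-1)) := by
  induction n generalizing g with
  | zero => simp [Matrix.det_fin_two, borderedToeplitz, mul_comm]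
  | succ n ih =>
    rw [det_borderedToeplitz_succ (hg 0) ht, ih fun i ↦ hg (i + 1)]
    ring

end BorderedToeplitz

section Symbol

variable {R : Type*}

/-- The two-sided sequence of diagonals of the Toeplitz matrix `T_{α,β}`: its value at `i - j` is
the `(i, j)`-entry, given by `α` on and below the main diagonal and by `β` above it. -/
def toeplitzSymbol (α β : ℕ → R) (k : ℤ) : R :=
  if 0 ≤ k then α k.toNat else β (-k).toNat

lemma toeplitzSymbol_neg_natCast {α β : ℕ → R} (h_zero : α 0 = β 0) (i : ℕ) :
    toeplitzSymbol α β (-i) = β i := by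
  cases i with
  | zero => simpa [toeplitzSymbol] using h_zero
  | succ i =>
    rw [toeplitzSymbol, if_neg (by lia), neg_neg, Int.toNat_natCast]

lemma toeplitzSymbol_recurrence [Semiring R] {α β : ℕ → R} {p q : R} (h_zero : α 0 = β 0)
    (hβ : ∀ i, β (i + 2) = p * β (i + 1) + q * β i) {k : ℤ} (hk : k < -1) :
    toeplitzSymbol α β k =
      p * toeplitzSymbol α β (k + 1) + q * toeplitzSymbol α β (k + 2) := by
  obtain ⟨i, rfl⟩ : ∃ i : ℕ, k = -(i + 2 : ℕ) := ⟨(-k - 2).toNat, by lia⟩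
  rw [show -((i + 2 : ℕ) : ℤ) + 1 = -(i + 1 : ℕ) by lia,
    show -((i + 2 : ℕ) : ℤ) + 2 = -i by lia]
  simp only [toeplitzSymbol_neg_natCast h_zero, hβ]

end Symbol

lemma toeplitzM_apply (α β : ℕ → ℤ) (n : ℕ) (i j : Fin (n + 1)) :
    toeplitzM α β n i j = toeplitzSymbol α β (i - j) := by
  simp [toeplitzM, toeplitzSymbol]

lemma toeplitzM_eq_borderedToeplitz (α β : ℕ → ℤ) (n : ℕ) :
    toeplitzM α β n = borderedToeplitz α (toeplitzSymbol α β) n := by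
  ext i j
  rw [toeplitzM_apply]
  cases j using Fin.cases with
  | zero => simp [toeplitzSymbol, borderedToeplitz_apply_zero]
  | succ j => simp [borderedToeplitz_apply_succ]

theorem det_toeplitzM_of_recurrence {α β : ℕ → ℤ} {p q : ℤ} (h_zero : α 0 = β 0)
    (hα : ∀ i, α i = p * α (i + 1) + q * α (i + 2))
    (hβ : ∀ i, β (i + 2) = p * β (i + 1) + q * β i) (n : ℕ) :
    (toeplitzM α β (n + 1)).det =
      (p * β 0 + q * α 1 - β 1) ^ n * (α n * β 0 - α (n + 1) * β 1) := by
  rw [toeplitzM_eq_borderedToeplitz,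
    det_borderedToeplitz hα (fun _ ↦ toeplitzSymbol_recurrence h_zero hβ)]
  simp [toeplitzSymbol, h_zero]

theorem det_toeplitzM_alternating {a : ℕ → ℤ} {p : ℤ}
    (ha : ∀ i, a (i + 2) = p * a (i + 1) + a i) (n : ℕ) :
    (toeplitzM (fun i ↦ (-1) ^ i * a i) a (n + 1)).det =
      (2 * a 1 - p * a 0) ^ n * (a 0 * a n + a 1 * a (n + 1)) := by
  rw [det_toeplitzM_of_recurrence (p := p) (q := 1) (by simp) (fun i ↦ by rw [ha]; ring)
    (by simpa using ha)]
  have base_eq : 2 * a 1 - p * a 0 = -1 * (p * a 0 + 1 * ((-1) ^ 1 * a 1) - a 1) := by ring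
  rw [base_eq, mul_pow]
  ring

lemma pellZ_add (m n : ℕ) :
    pellZ (m + n + 1) = pellZ m * pellZ n + pellZ (m + 1) * pellZ (n + 1) := by
  induction n using Nat.twoStepInduction with
  | zero => simp [pellZ]
  | one =>
    simp only [pellZ]
    ring
  | more n ih₀ ih₁ =>
    calc pellZ (m + (n + 2) + 1) = 2 * pellZ (m + (n + 1) + 1) + pellZ (m + n + 1) := rfl
      _ = pellZ m * (2 * pellZ (n + 1) + pellZ n) +
            pellZ (m + 1) * (2 * pellZ (n + 2) + pellZ (n + 1)) := by
        rw [ih₀, ih₁]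
        ring
      _ = pellZ m * pellZ (n + 2) + pellZ (m + 1) * pellZ (n + 3) := rfl

theorem det_toeplitzM_pellZ_shift (m n : ℕ) :
    (toeplitzM (fun i ↦ (-1) ^ i * pellZ (m + i)) (fun i ↦ pellZ (m + i)) (n + 1)).det =
      (2 * pellZ (m + 1) - 2 * pellZ m) ^ n * pellZ (2 * m + (n + 1)) := by
  rw [det_toeplitzM_alternating (a := fun i ↦ pellZ (m + i)) (fun _ ↦ rfl),
    show 2 * m + (n + 1) = m + (m + n) + 1 by ring, pellZ_add]
  rfl

/-- Corollary 3.3: for `α_i = P_{m+i}` with `m ≥ 1` and every `n ≥ 1`,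
`det T_{α̃,α}(n) = (P_{m-1} + P_{m+1})^(n-1) * P_{2m+n}`; and for `m = 0`,
`det T_{P̃,P}(n) = 2^(n-1) * P_n`. -/
theorem det_toeplitz_pell_shift :
    (∀ m : ℕ, 1 ≤ m → ∀ n : ℕ, 1 ≤ n →
      (toeplitzM (fun i => (-1) ^ i * pellZ (m + i)) (fun i => pellZ (m + i)) n).det =
        (pellZ (m - 1) + pellZ (m + 1)) ^ (n - 1) * pellZ (2 * m + n)) ∧
    (∀ n : ℕ, 1 ≤ n →
      (toeplitzM (fun i => (-1) ^ i * pellZ i) pellZ n).det = 2 ^ (n - 1) * pellZ n) := by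
  refine ⟨fun m hm n hn ↦ ?_, fun n hn ↦ ?_⟩
  · obtain ⟨m, rfl⟩ := Nat.exists_eq_add_of_le' hm
    obtain ⟨n, rfl⟩ := Nat.exists_eq_add_of_le' hn
    have base_eq : 2 * pellZ (m + 2) - 2 * pellZ (m + 1) = pellZ m + pellZ (m + 2) := by
      rw [pellZ]
      ring
    rw [det_toeplitzM_pellZ_shift, base_eq]
    rfl
  · obtain ⟨n, rfl⟩ := Nat.exists_eq_add_of_le' hn
    simpa [pellZ] using det_toeplitzM_pellZ_shift 0 n
end

section
/- Let α be the sequence α_i = F_{i+1} (i.e., α = (1, 1, 2, 3, 5, 8, …)). Then for every n ≥ 0, det T_{α̃,α}(n) = F_{n+2} and det T_{α,α̃}(n) = F_{n+2}. -/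
/-! With Fibonacci numbers of negative index, the entry of `T_{α̃,α}(n)` at `j - i = k` is `F_{k+1}`
for `k ≥ 0` and `F_{k-1}` for `k ≤ 0`. Each row thus satisfies the Fibonacci recurrence, except for
a defect of `1` where it crosses the diagonal. Subtracting from each column its two predecessors
turns all columns but the first two into standard basis vectors, so the determinant is, up to
sign, the minor on the first and last rows and the first two columns. The other matrix is the
transpose. -/

section ColumnRecurrence

variable {R : Type*} [CommRing R]

open Matrix

theorem det_mul_apply_of_mulVec_eq_single_s3 {n : ℕ} {M : Matrix (Fin (n + 1)) (Fin (n + 1)) R}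
    {w : Fin (n + 1) → R} {r : Fin (n + 1)} {s : R} (h : M *ᵥ w = Pi.single r s)
    (k : Fin (n + 1)) :
    M.det * w k = (-1) ^ (r + k : ℕ) * s * (M.submatrix r.succAbove k.succAbove).det :=
  calc
    M.det * w k = (M.adjugate *ᵥ (M *ᵥ w)) k := by
      rw [mulVec_mulVec, adjugate_mul, smul_mulVec, one_mulVec, Pi.smul_apply, smul_eq_mul]
    _ = M.adjugate k r * s := by
      rw [h, mulVec_single]
      rfl
    _ = (-1) ^ (r + k : ℕ) * s * (M.submatrix r.succAbove k.succAbove).det := by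
      rw [adjugate_fin_succ_eq_det_submatrix]
      ring

theorem det_eq_mul_det_submatrix_of_col_eq_add_single {n : ℕ}
    {M : Matrix (Fin (n + 1)) (Fin (n + 1)) R} {a b k r : Fin (n + 1)} {p q s : R}
    (ha : a ≠ k) (hb : b ≠ k) (h : M.col k = p • M.col a + q • M.col b + Pi.single r s) :
    M.det = (-1) ^ (r + k : ℕ) * s * (M.submatrix r.succAbove k.succAbove).det := by
  let w : Fin (n + 1) → R := Pi.single k 1 - p • Pi.single a 1 - q • Pi.single b 1
  have hw : M *ᵥ w = Pi.single r s := by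
    simp only [w, mulVec_sub, mulVec_smul, mulVec_single_one, h]
    abel
  have hwk : w k = 1 := by simp [w, ha.symm, hb.symm]
  rw [← det_mul_apply_of_mulVec_eq_single_s3 hw, hwk, mul_one]

theorem det_eq_prod_mul_minor_of_col_recurrence {n : ℕ}
    (M : Matrix (Fin (n + 2)) (Fin (n + 2)) R) (p q s : Fin n → R)
    (h : ∀ j : Fin n, M.col j.succ.succ =
      p j • M.col j.succ.castSucc + q j • M.col j.castSucc.castSucc +
        Pi.single j.succ.castSucc (s j)) :
    M.det = (∏ j, -s j) *
      (M 0 0 * M (Fin.last (n + 1)) 1 - M 0 1 * M (Fin.last (n + 1)) 0) := by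
  induction n with
  | zero => simp [det_fin_two]
  | succ n ih =>
    let r : Fin (n + 3) := (Fin.last (n + 1)).castSucc
    -- Deleting row `r` and the last column preserves both the recurrence and the minor.
    let N := M.submatrix r.succAbove Fin.castSucc
    have expand : M.det = -s (Fin.last n) * N.det := by
      have hsign : (-1 : R) ^ ((r : ℕ) + Fin.last (n + 2)) = -1 :=
        Odd.neg_one_pow ⟨n + 1, by simp only [r, Fin.val_castSucc, Fin.val_last]; ring⟩
      have hlast := h (Fin.last n)
      simp only [Fin.succ_last] at hlast
      rw [det_eq_mul_det_submatrix_of_col_eq_add_single (Fin.castSucc_ne_last _)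
        (Fin.castSucc_ne_last _) hlast, Fin.succAbove_last, hsign, neg_one_mul]
    have hN (j : Fin n) : N.col j.succ.succ =
        p j.castSucc • N.col j.succ.castSucc + q j.castSucc • N.col j.castSucc.castSucc +
          Pi.single j.succ.castSucc (s j.castSucc) := by
      have hr : r.succAbove j.castSucc.succ = j.castSucc.castSucc.succ :=
        Fin.succAbove_of_castSucc_lt _ _ (by simp [r, Fin.lt_def])
      ext i
      have hri : r.succAbove i = j.castSucc.castSucc.succ ↔ i = j.castSucc.succ := by
        rw [← hr, Fin.succAbove_right_inj]
      simpa [N, Pi.single_apply, hri] using congrFun (h j.castSucc) (r.succAbove i)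
    have hfirst : r.succAbove 0 = 0 := Fin.succAbove_ne_zero_zero (by simp [r, Fin.ext_iff])
    have hlast : r.succAbove (Fin.last (n + 1)) = Fin.last (n + 2) := Fin.succAbove_castSucc_self _
    rw [expand, ih N _ _ _ hN, Fin.prod_univ_castSucc]
    simp only [N, submatrix_apply, hfirst, hlast, Fin.castSucc_zero, Fin.castSucc_one]
    ring

end ColumnRecurrence

theorem transpose_toeplitzM {α β : ℕ → ℤ} (h₀ : α 0 = β 0) (n : ℕ) :
    (toeplitzM α β n).transpose = toeplitzM β α n := by
  ext i j
  simp only [toeplitzM, Matrix.transpose_apply, Matrix.of_apply]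
  rcases lt_trichotomy (i : ℕ) j with h | h | h
  · rw [if_pos h.le, if_neg h.not_ge]
  · simp [h, h₀]
  · rw [if_neg h.not_ge, if_pos h.le]

theorem toeplitzM_apply_of_eq_add {α β : ℕ → ℤ} {n d : ℕ} {i j : Fin (n + 1)}
    (h : (i : ℕ) = j + d) : toeplitzM α β n i j = α d := by
  simp only [toeplitzM, Matrix.of_apply, h, Nat.le_add_right, if_true, Nat.add_sub_cancel_left]

theorem toeplitzM_apply_of_add_eq {α β : ℕ → ℤ} (h₀ : α 0 = β 0) {n d : ℕ} {i j : Fin (n + 1)}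
    (h : (i : ℕ) + d = j) : toeplitzM α β n i j = β d := by
  rw [← transpose_toeplitzM h₀.symm, Matrix.transpose_apply, toeplitzM_apply_of_eq_add h.symm]

-- `hα` and `hβ` are one recurrence, for the two-sided sequence `β k` (`k ≥ 0`), `α (-k)` (`k ≤ 0`).
theorem col_toeplitzM_succ_succ_of_recurrence {α β : ℕ → ℤ} {p q : ℤ} (h₀ : α 0 = β 0)
    (hα : ∀ k, α k = p * α (k + 1) + q * α (k + 2))
    (hβ : ∀ k, β (k + 2) = p * β (k + 1) + q * β k) {n : ℕ} (j : Fin n) :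
    (toeplitzM α β (n + 1)).col j.succ.succ =
      p • (toeplitzM α β (n + 1)).col j.succ.castSucc +
        q • (toeplitzM α β (n + 1)).col j.castSucc.castSucc +
        Pi.single j.succ.castSucc (β 1 - p * β 0 - q * α 1) := by
  ext i
  simp only [Matrix.col_apply, Pi.add_apply, Pi.smul_apply, smul_eq_mul, Pi.single_apply,
    Fin.ext_iff, Fin.val_castSucc, Fin.val_succ]
  obtain ⟨d, hd⟩ | hi | ⟨d, hd⟩ :
      (∃ d, (i : ℕ) + d = j) ∨ (i : ℕ) = j + 1 ∨ ∃ d, (i : ℕ) = j + 2 + d := by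
    rcases lt_trichotomy (i : ℕ) (j + 1) with h | h | h
    · exact .inl ⟨j - i, by omega⟩
    · exact .inr (.inl h)
    · exact .inr (.inr ⟨i - (j + 2), by omega⟩)
  · rw [toeplitzM_apply_of_add_eq h₀ (d := d + 2) (by grind),
      toeplitzM_apply_of_add_eq h₀ (d := d + 1) (by grind),
      toeplitzM_apply_of_add_eq h₀ (d := d) (by grind), if_neg (by omega), hβ, add_zero]
  · rw [toeplitzM_apply_of_add_eq h₀ (d := 1) (by grind),
      toeplitzM_apply_of_add_eq h₀ (d := 0) (by grind),
      toeplitzM_apply_of_eq_add (d := 1) (by grind), if_pos hi]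
    ring
  · rw [toeplitzM_apply_of_eq_add (d := d) (by grind),
      toeplitzM_apply_of_eq_add (d := d + 1) (by grind),
      toeplitzM_apply_of_eq_add (d := d + 2) (by grind), if_neg (by omega), hα, add_zero]

theorem det_toeplitzM_succ_of_recurrence {α β : ℕ → ℤ} {p q : ℤ} (h₀ : α 0 = β 0)
    (hα : ∀ k, α k = p * α (k + 1) + q * α (k + 2))
    (hβ : ∀ k, β (k + 2) = p * β (k + 1) + q * β k) (n : ℕ) :
    (toeplitzM α β (n + 1)).det =
      (-(β 1 - p * β 0 - q * α 1)) ^ n * (α 0 * α n - β 1 * α (n + 1)) := by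
  rw [det_eq_prod_mul_minor_of_col_recurrence _ (fun _ => p) (fun _ => q) _
      (col_toeplitzM_succ_succ_of_recurrence h₀ hα hβ),
    Fin.prod_const, toeplitzM_apply_of_eq_add (d := 0) rfl,
    toeplitzM_apply_of_eq_add (d := n) (by rw [Fin.val_one, Fin.val_last, add_comm]),
    toeplitzM_apply_of_add_eq h₀ (d := 1) (by simp),
    toeplitzM_apply_of_eq_add (d := n + 1) (by simp)]

theorem fibZ_add_two (n : ℕ) : fibZ (n + 2) = fibZ (n + 1) + fibZ n := rfl

theorem det_toeplitzM_alternating_fibZ (n : ℕ) :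
    (toeplitzM (fun i => (-1) ^ i * fibZ (i + 1)) (fun i => fibZ (i + 1)) n).det =
      fibZ (n + 2) := by
  cases n with
  | zero => simp [toeplitzM, fibZ]
  | succ n =>
    have hα (k : ℕ) : (-1) ^ k * fibZ (k + 1) =
        1 * ((-1) ^ (k + 1) * fibZ (k + 2)) + 1 * ((-1) ^ (k + 2) * fibZ (k + 3)) := by
      rw [fibZ_add_two (k + 1)]
      ring
    have hβ (k : ℕ) : fibZ (k + 3) = 1 * fibZ (k + 2) + 1 * fibZ (k + 1) := by
      rw [fibZ_add_two (k + 1)]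
      ring
    have hsign : (-1 : ℤ) ^ n * (-1) ^ n = 1 := by rw [← mul_pow]; simp
    rw [det_toeplitzM_succ_of_recurrence (by simp) hα hβ]
    calc
      _ = (-1 : ℤ) ^ n * (-1) ^ n * (fibZ (n + 2) + fibZ (n + 1)) := by
        simp only [fibZ]
        ring
      _ = fibZ (n + 3) := by rw [hsign, one_mul, fibZ_add_two (n + 1)]

/-- For `α_i = F_{i+1}`: `det T_{α̃,α}(n) = F_{n+2}` and `det T_{α,α̃}(n) = F_{n+2}`
for every `n ≥ 0`. -/
theorem det_toeplitz_fib_succ (n : ℕ) :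
    (toeplitzM (fun i => (-1) ^ i * fibZ (i + 1)) (fun i => fibZ (i + 1)) n).det =
      fibZ (n + 2) ∧
    (toeplitzM (fun i => fibZ (i + 1)) (fun i => (-1) ^ i * fibZ (i + 1)) n).det =
      fibZ (n + 2) := by
  refine ⟨det_toeplitzM_alternating_fibZ n, ?_⟩
  rw [← transpose_toeplitzM (by simp), Matrix.det_transpose, det_toeplitzM_alternating_fibZ]
end

section
/- Let c be a complex number and let (a,b) = (c − 1 + √2, c − 1 − √2) or (a,b) = (c − 1 − √2, c − 1 + √2). Then for every positive integer n, det T_n(a,b,c) = c·P_n + P_{n−1}, where P is the Pell sequence. -/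
/-- `T_n(a,b,c)`: the `n × n` Toeplitz matrix with diagonal entries `c`, entries strictly
above the diagonal `a`, and entries strictly below the diagonal `b`. -/
def toeplitz3 (a b c : ℂ) (n : ℕ) : Matrix (Fin n) (Fin n) ℂ :=
  Matrix.of fun i j => if (i : ℕ) = (j : ℕ) then c else if (i : ℕ) < (j : ℕ) then a else b

/-!
Subtracting the second row from the first, and then the second column from the first, clears the
first row and column of `T_{n+2}(a,b,c)` beyond the leading `2 × 2` corner, while the principal
submatrices on the remaining indices are again `T_{n+1}` and `T_n`. Hence
`det T_{n+2} = ((c - a) + (c - b)) det T_{n+1} - (c - a) (c - b) det T_n`. For the given `a` and `b`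
the numbers `c - a` and `c - b` are the roots `1 ± √2` of `x² = 2x + 1`, so this is the Pell
recurrence, with initial values `det T_0 = 1` and `det T_1 = c`.
-/

section Determinants

variable {R : Type*} [CommRing R] {n : ℕ}

theorem det_eq_sub_of_row_col_zero (B : Matrix (Fin (n + 2)) (Fin (n + 2)) R)
    (hrow : ∀ j : Fin n, B 0 j.succ.succ = 0) (hcol : ∀ i : Fin n, B i.succ.succ 0 = 0) :
    B.det = B 0 0 * (B.submatrix Fin.succ Fin.succ).det
      - B 0 1 * B 1 0 * (B.submatrix (Fin.succ ∘ Fin.succ) (Fin.succ ∘ Fin.succ)).det := by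
  have hminor : (B.submatrix Fin.succ (Fin.succAbove 1)).det =
      B 1 0 * (B.submatrix (Fin.succ ∘ Fin.succ) (Fin.succ ∘ Fin.succ)).det := by
    have hsucc : Fin.succAbove (1 : Fin (n + 2)) ∘ Fin.succ = Fin.succ ∘ Fin.succ := by
      ext j; simp
    simp [Matrix.det_succ_column_zero, Fin.sum_univ_succ, hcol, hsucc]
  rw [Matrix.det_succ_row_zero]
  simp only [Fin.sum_univ_succ, hrow, Fin.succ_zero_eq_one, hminor, Fin.succAbove_zero,
    Fin.val_zero, Fin.val_one, pow_zero, pow_one, mul_zero, zero_mul, Finset.sum_const_zero]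
  ring

theorem det_eq_sub_of_row_col_eq (B : Matrix (Fin (n + 2)) (Fin (n + 2)) R)
    (hrow : ∀ j : Fin n, B 0 j.succ.succ = B 1 j.succ.succ)
    (hcol : ∀ i : Fin n, B i.succ.succ 0 = B i.succ.succ 1) :
    B.det = (B 0 0 - B 0 1 - B 1 0 + B 1 1) * (B.submatrix Fin.succ Fin.succ).det
      - (B 0 1 - B 1 1) * (B 1 0 - B 1 1) *
        (B.submatrix (Fin.succ ∘ Fin.succ) (Fin.succ ∘ Fin.succ)).det := by
  let B₁ := B.updateRow 0 (B 0 + (-1 : R) • B 1)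
  let B₂ := B₁.updateCol 0 (fun i => B₁ i 0 + (-1 : R) • B₁ i 1)
  have hdet : B₂.det = B.det :=
    (Matrix.det_updateCol_add_smul_self B₁ zero_ne_one (-1)).trans
      (Matrix.det_updateRow_add_smul_self B zero_ne_one (-1))
  have hsub : B₂.submatrix Fin.succ Fin.succ = B.submatrix Fin.succ Fin.succ := by
    ext i j
    simp [B₂, B₁, Matrix.updateRow_apply]
  have hsub₂ : B₂.submatrix (Fin.succ ∘ Fin.succ) (Fin.succ ∘ Fin.succ) =
      B.submatrix (Fin.succ ∘ Fin.succ) (Fin.succ ∘ Fin.succ) :=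
    congrArg (Matrix.submatrix · Fin.succ Fin.succ) hsub
  have h₀₀ : B₂ 0 0 = B 0 0 - B 0 1 - B 1 0 + B 1 1 := by
    simp only [B₂, B₁, Matrix.updateCol_self, Matrix.updateRow_self, Pi.add_apply, Pi.smul_apply,
      smul_eq_mul]
    ring
  have h₀₁ : B₂ 0 1 = B 0 1 - B 1 1 := by simp [B₂, B₁, sub_eq_add_neg]
  have h₁₀ : B₂ 1 0 = B 1 0 - B 1 1 := by simp [B₂, B₁, sub_eq_add_neg]
  rw [← hdet, det_eq_sub_of_row_col_zero B₂, h₀₀, h₀₁, h₁₀, hsub, hsub₂]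
  · intro j
    simp [B₂, B₁, hrow]
  · intro i
    simp [B₂, B₁, hcol]

end Determinants

section Toeplitz

variable {R : Type*}

/-- The matrix with entries `c` on the diagonal, `a` above it and `b` below it. Indexing by an
arbitrary linear order lets its principal submatrices be matrices of the same kind; `toeplitz3` is
the case of the index type `Fin n` over `ℂ`. -/
def orderToeplitz (ι : Type*) [LinearOrder ι] (a b c : R) : Matrix ι ι R :=
  Matrix.of fun i j => if i = j then c else if i < j then a else b

variable {ι : Type*} [LinearOrder ι] {a b c : R}

theorem orderToeplitz_apply_self (i : ι) : orderToeplitz ι a b c i i = c := by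
  simp [orderToeplitz]

theorem orderToeplitz_apply_of_lt {i j : ι} (h : i < j) : orderToeplitz ι a b c i j = a := by
  simp [orderToeplitz, h, h.ne]

theorem orderToeplitz_apply_of_gt {i j : ι} (h : j < i) : orderToeplitz ι a b c i j = b := by
  simp [orderToeplitz, h.ne', h.not_gt]

theorem orderToeplitz_submatrix_of_strictMono {κ : Type*} [LinearOrder κ] {f : ι → κ}
    (hf : StrictMono f) :
    (orderToeplitz κ a b c).submatrix f f = orderToeplitz ι a b c := by
  ext i j
  simp [orderToeplitz, hf.lt_iff_lt, hf.injective.eq_iff]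

theorem toeplitz3_eq_orderToeplitz (a b c : ℂ) (n : ℕ) :
    toeplitz3 a b c n = orderToeplitz (Fin n) a b c := by
  ext i j
  simp [toeplitz3, orderToeplitz, Fin.ext_iff]

theorem det_orderToeplitz_add_two [CommRing R] (a b c : R) (n : ℕ) :
    (orderToeplitz (Fin (n + 2)) a b c).det =
      ((c - a) + (c - b)) * (orderToeplitz (Fin (n + 1)) a b c).det
        - (c - a) * (c - b) * (orderToeplitz (Fin n) a b c).det := by
  have hlt (i : Fin n) : 1 < i.succ.succ := Fin.succ_lt_succ_iff.2 i.succ_pos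
  rw [det_eq_sub_of_row_col_eq,
    orderToeplitz_submatrix_of_strictMono Fin.strictMono_succ,
    orderToeplitz_submatrix_of_strictMono (Fin.strictMono_succ.comp Fin.strictMono_succ)]
  · simp only [orderToeplitz_apply_self, orderToeplitz_apply_of_lt Fin.zero_lt_one,
      orderToeplitz_apply_of_gt Fin.zero_lt_one]
    ring
  · intro j
    rw [orderToeplitz_apply_of_lt j.succ.succ_pos, orderToeplitz_apply_of_lt (hlt j)]
  · intro i
    rw [orderToeplitz_apply_of_gt i.succ.succ_pos, orderToeplitz_apply_of_gt (hlt i)]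

end Toeplitz

theorem pellZ_add_two (n : ℕ) : pellZ (n + 2) = 2 * pellZ (n + 1) + pellZ n := rfl

theorem eq_pellZ_smul_add_of_recurrence {M : Type*} [AddCommGroup M] {u : ℕ → M}
    (hu : ∀ n, u (n + 2) = (2 : ℤ) • u (n + 1) + u n) (n : ℕ) :
    u (n + 1) = pellZ (n + 1) • u 1 + pellZ n • u 0 := by
  induction n using Nat.twoStepInduction with
  | zero => simp [pellZ]
  | one => simp [hu, pellZ]
  | more n ih ih' =>
    rw [hu, ih', ih, pellZ_add_two (n + 1), pellZ_add_two n]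
    module

theorem det_toeplitz3_pell_general {R : Type*} [CommRing R] (c : R) {s : R} (hs : s ^ 2 = 2)
    (n : ℕ) (hn : 1 ≤ n) :
    (orderToeplitz (Fin n) (c - 1 + s) (c - 1 - s) c).det =
      c * (pellZ n : R) + (pellZ (n - 1) : R) := by
  obtain ⟨m, rfl⟩ := Nat.exists_eq_add_of_le' hn
  let D (k : ℕ) : R := (orderToeplitz (Fin k) (c - 1 + s) (c - 1 - s) c).det
  have hD (k : ℕ) : D (k + 2) = (2 : ℤ) • D (k + 1) + D k := by
    simp only [D, det_orderToeplitz_add_two, zsmul_eq_mul, Int.cast_ofNat]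
    linear_combination D k * hs
  have hD₀ : D 0 = 1 := Matrix.det_fin_zero
  have hD₁ : D 1 = c := by simp [D, orderToeplitz_apply_self]
  simpa [hD₀, hD₁, mul_comm] using eq_pellZ_smul_add_of_recurrence hD m

/-- If `(a,b) = (c - 1 + √2, c - 1 - √2)` or `(a,b) = (c - 1 - √2, c - 1 + √2)`, then for
every `n ≥ 1`, `det T_n(a,b,c) = c * P_n + P_{n-1}`. -/
theorem det_toeplitz3_pell (a b c : ℂ)
    (h : (a = c - 1 + (Real.sqrt 2 : ℂ) ∧ b = c - 1 - (Real.sqrt 2 : ℂ)) ∨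
         (a = c - 1 - (Real.sqrt 2 : ℂ) ∧ b = c - 1 + (Real.sqrt 2 : ℂ))) :
    ∀ n : ℕ, 1 ≤ n →
      (toeplitz3 a b c n).det = c * (pellZ n : ℂ) + (pellZ (n - 1) : ℂ) := by
  have hs : (Real.sqrt 2 : ℂ) ^ 2 = 2 := by exact_mod_cast Real.sq_sqrt zero_le_two
  rcases h with ⟨rfl, rfl⟩ | ⟨rfl, rfl⟩ <;> simp only [toeplitz3_eq_orderToeplitz]
  · exact det_toeplitz3_pell_general c hs
  · simpa only [← sub_eq_add_neg, sub_neg_eq_add] using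
      det_toeplitz3_pell_general c ((neg_sq _).trans hs)
end

section
/- Let c be a complex number and let (a,b) = (c + 1, c − 2) or (a,b) = (c − 2, c + 1). Then for every positive integer n, det T_n(a,b,c) = c·J_n + 2·J_{n−1}, where J is the Jacobsthal sequence. -/
/-- The Jacobsthal sequence: `J 0 = 0`, `J 1 = 1`, `J n = J (n-1) + 2 * J (n-2)`. -/
def jacobsthalZ : ℕ → ℤ
  | 0 => 0
  | 1 => 1
  | n + 2 => jacobsthalZ (n + 1) + 2 * jacobsthalZ n

/-!
The first row of `T_{n+1}(a,b,c)` is `(c - a) e₀ + a (1, …, 1)`. Expanding the determinant along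
this decomposition, the first part contributes `(c - a) det T_n`; in the second part, subtracting
`b` times the row of ones from every other row leaves an upper triangular matrix with diagonal
`1, c - b, …, c - b`. Hence `det T_{n+1} = (c - a) det T_n + a (c - b) ^ n`. For
`(a,b) = (c + 1, c - 2)` this reads `D_{n+1} = -D_n + (c + 1) 2 ^ n`, and `c J_n + 2 J_{n-1}`
satisfies the same recurrence because `J_n + J_{n+1} = 2 ^ n`. Transposition exchanges `a` and `b`.
-/

/-- The Toeplitz matrix `T_n(a,b,c)` over an arbitrary type of entries: `toeplitz3` is the case of
complex entries. Indices are compared in `Fin n` rather than in `ℕ`. -/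
def threeValuedToeplitz {R : Type*} (a b c : R) (n : ℕ) : Matrix (Fin n) (Fin n) R :=
  Matrix.of fun i j => if i = j then c else if i < j then a else b

theorem toeplitz3_eq_threeValuedToeplitz (a b c : ℂ) (n : ℕ) :
    toeplitz3 a b c n = threeValuedToeplitz a b c n := by
  ext i j
  simp only [toeplitz3, threeValuedToeplitz, Matrix.of_apply, Fin.ext_iff, Fin.lt_def]

namespace threeValuedToeplitz

theorem transpose {R : Type*} (a b c : R) (n : ℕ) :
    (threeValuedToeplitz a b c n).transpose = threeValuedToeplitz b a c n := by
  ext i j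
  rcases lt_trichotomy i j with h | rfl | h
  · simp [threeValuedToeplitz, h, h.ne, h.ne', h.not_gt]
  · simp [threeValuedToeplitz]
  · simp [threeValuedToeplitz, h, h.ne, h.ne', h.not_gt]

theorem submatrix_succ {R : Type*} (a b c : R) (n : ℕ) :
    (threeValuedToeplitz a b c (n + 1)).submatrix Fin.succ Fin.succ =
      threeValuedToeplitz a b c n := by
  ext i j
  simp [threeValuedToeplitz]

theorem row_zero {R : Type*} [Ring R] (a b c : R) (n : ℕ) :
    threeValuedToeplitz a b c (n + 1) 0 = (c - a) • Pi.single 0 1 + a • 1 := by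
  ext j
  cases j using Fin.cases <;> simp [threeValuedToeplitz, (Fin.succ_ne_zero _).symm]

variable {R : Type*} [CommRing R] (a b c : R) (n : ℕ)

theorem det_swap : (threeValuedToeplitz b a c n).det = (threeValuedToeplitz a b c n).det := by
  rw [← threeValuedToeplitz.transpose, Matrix.det_transpose]

theorem det_updateRow_single :
    ((threeValuedToeplitz a b c (n + 1)).updateRow 0 (Pi.single 0 1)).det =
      (threeValuedToeplitz a b c n).det := by
  rw [← Matrix.adjugate_apply, Matrix.adjugate_fin_succ_eq_det_submatrix]
  simp [submatrix_succ]

theorem det_updateRow_one :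
    ((threeValuedToeplitz a b c (n + 1)).updateRow 0 1).det = (c - b) ^ n := by
  let U := (threeValuedToeplitz (a - b) 0 (c - b) (n + 1)).updateRow 0 1
  have clear_below_diagonal :
      ((threeValuedToeplitz a b c (n + 1)).updateRow 0 1).det = U.det := by
    refine Matrix.det_eq_of_forall_row_eq_smul_add_const (Function.update (fun _ => b) 0 0) 0
      (Function.update_self ..) fun i j => ?_
    cases i using Fin.cases with
    | zero => simp [U]
    | succ i =>
      simp only [U, threeValuedToeplitz, Matrix.updateRow_self, Matrix.of_apply, Pi.one_apply,
        Matrix.updateRow_ne (Fin.succ_ne_zero i), Function.update_of_ne (Fin.succ_ne_zero i)]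
      split_ifs <;> ring
  have upperTriangular : U.IsUpperTriangular := fun i j (hij : j < i) => by
    have hi : i ≠ 0 := Fin.ne_zero_of_lt hij
    simp [U, threeValuedToeplitz, hi, hij.ne', hij.not_gt]
  rw [clear_below_diagonal, Matrix.det_of_isUpperTriangular upperTriangular, Fin.prod_univ_succ]
  simp [U, threeValuedToeplitz]

theorem det_succ :
    (threeValuedToeplitz a b c (n + 1)).det =
      (c - a) * (threeValuedToeplitz a b c n).det + a * (c - b) ^ n := by
  rw [← Matrix.updateRow_eq_self (threeValuedToeplitz a b c (n + 1)) 0, row_zero,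
    Matrix.det_updateRow_add, Matrix.det_updateRow_smul, Matrix.det_updateRow_smul,
    det_updateRow_single, det_updateRow_one]

end threeValuedToeplitz

theorem jacobsthalZ_add_jacobsthalZ_succ (n : ℕ) :
    jacobsthalZ n + jacobsthalZ (n + 1) = 2 ^ n := by
  induction n with
  | zero => rfl
  | succ n ih => rw [jacobsthalZ, pow_succ]; linear_combination 2 * ih

theorem threeValuedToeplitz.det_add_one_sub_two {R : Type*} [CommRing R] (c : R) (n : ℕ) :
    (threeValuedToeplitz (c + 1) (c - 2) c (n + 1)).det =
      c * (jacobsthalZ (n + 1) : R) + 2 * (jacobsthalZ n : R) := by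
  induction n with
  | zero => simp [threeValuedToeplitz, jacobsthalZ]
  | succ n ih =>
    have sum_eq : (jacobsthalZ n + jacobsthalZ (n + 1) : R) = 2 ^ n := by
      exact_mod_cast congrArg (Int.cast (R := R)) (jacobsthalZ_add_jacobsthalZ_succ n)
    rw [threeValuedToeplitz.det_succ, ih, jacobsthalZ]
    push_cast
    linear_combination (-2 * (c + 1)) * sum_eq

theorem det_toeplitz3_jacobsthal_general {R : Type*} [CommRing R] (a b c : R)
    (h : (a = c + 1 ∧ b = c - 2) ∨ (a = c - 2 ∧ b = c + 1)) (n : ℕ) (hn : 1 ≤ n) :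
    (threeValuedToeplitz a b c n).det =
      c * (jacobsthalZ n : R) + 2 * (jacobsthalZ (n - 1) : R) := by
  obtain ⟨m, rfl⟩ := Nat.exists_eq_add_of_le' hn
  rcases h with ⟨rfl, rfl⟩ | ⟨rfl, rfl⟩
  · exact threeValuedToeplitz.det_add_one_sub_two c m
  · rw [threeValuedToeplitz.det_swap]
    exact threeValuedToeplitz.det_add_one_sub_two c m

/-- If `(a,b) = (c + 1, c - 2)` or `(a,b) = (c - 2, c + 1)`, then for every `n ≥ 1`,
`det T_n(a,b,c) = c * J_n + 2 * J_{n-1}`. -/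
theorem det_toeplitz3_jacobsthal (a b c : ℂ)
    (h : (a = c + 1 ∧ b = c - 2) ∨ (a = c - 2 ∧ b = c + 1)) :
    ∀ n : ℕ, 1 ≤ n →
      (toeplitz3 a b c n).det = c * (jacobsthalZ n : ℂ) + 2 * (jacobsthalZ (n - 1) : ℂ) := by
  intro n hn
  rw [toeplitz3_eq_threeValuedToeplitz, det_toeplitz3_jacobsthal_general a b c h n hn]
end

section
/- Let α and β be the integer sequences α_i = 2^{i+1} − 1 and β_i = 2 − 2^i (so α_0 = β_0 = 1). Then for every n ≥ 0, det P_{α,β}(n) = J_{n+2}. -/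
/-- Entry of the generalized Pascal triangle `P_{α,β}`:
`P (i,0) = α i`, `P (0,j) = β j`, and `P (i,j) = P (i,j-1) + P (i-1,j)` for `i,j ≥ 1`
(consistent when `α 0 = β 0`). -/
def pascalEntry (α β : ℕ → ℤ) : ℕ → ℕ → ℤ
  | i, 0 => α i
  | 0, j + 1 => β (j + 1)
  | i + 1, j + 1 => pascalEntry α β (i + 1) j + pascalEntry α β i (j + 1)
  termination_by i j => i + j

/-- The generalized Pascal triangle `P_{α,β}(n)` of order `n+1`. -/
def pascalM (α β : ℕ → ℤ) (n : ℕ) : Matrix (Fin (n + 1)) (Fin (n + 1)) ℤ :=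
  Matrix.of fun i j => pascalEntry α β (i : ℕ) (j : ℕ)

/-!
If `p` satisfies the Pascal recurrence, then taking one forward difference in each variable maps
`p` to itself. Hence the mixed differences `Δ₁ᵏ Δ₂ˡ p (0, 0)` depend only on `k - l`, and by the
Gregory–Newton formula the matrix of `p` is `L * T * Lᵀ`, where `L` is the unitriangular matrix of
binomial coefficients and `T` is the Toeplitz matrix of the differences of the boundary sequences.
For the given `α` and `β`, the entries of `T` are `2` below the diagonal, `1` on it and `-1` above
it. The determinant of a matrix with constants `b` below, `d` on and `c` above the diagonal is found
by subtracting a variable multiple of the all-ones matrix: the result is affine in that variable,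
and known at `b` and at `c`, where the matrix becomes triangular.
-/

open Matrix
open scoped fwdDiff

section FwdDiff

variable {G : Type*} [AddCommGroup G]

theorem eq_sum_fin_choose_smul_fwdDiff_iter (f : ℕ → G) {i n : ℕ} (hi : i < n) :
    f i = ∑ k : Fin n, i.choose k • Δ_[1] ^[k] f 0 := by
  have newton := shift_eq_sum_fwdDiff_iter 1 f i 0
  rw [zero_add, smul_eq_mul, mul_one] at newton
  rw [newton, Fin.sum_univ_eq_sum_range (fun k ↦ i.choose k • Δ_[1] ^[k] f 0)]
  refine Finset.sum_subset (Finset.range_mono hi) fun k _ hk ↦ ?_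
  rw [Nat.choose_eq_zero_of_lt (by simpa using hk), zero_smul]

theorem fwdDiff_iter_succ_mul_pow_add {R : Type*} [CommRing R] (a r c : R) (k i : ℕ) :
    Δ_[1] ^[k + 1] (fun i ↦ a * r ^ i + c) i = a * (r - 1) ^ (k + 1) * r ^ i := by
  induction k generalizing i with
  | zero =>
    rw [zero_add, Function.iterate_one, fwdDiff]
    ring
  | succ k ih =>
    rw [Function.iterate_succ_apply', fwdDiff, ih, ih]
    ring

/-- The difference `Δ₁ᵏ Δ₂ˡ f (0, 0)` of a function of two variables: the outer argument of `f` is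
differenced `k` times, the inner one `l` times. -/
def mixedFwdDiff (f : ℕ → ℕ → G) (k l : ℕ) : G := Δ_[1] ^[l] (Δ_[1] ^[k] f 0) 0

theorem fwdDiff_iter_apply_apply {M ι : Type*} [AddCommMonoid M] (h : M) (f : M → ι → G) (k : ℕ)
    (x : M) (j : ι) : Δ_[h] ^[k] f x j = Δ_[h] ^[k] (fun y ↦ f y j) x := by
  induction k generalizing x with
  | zero => rfl
  | succ k ih => simp only [Function.iterate_succ_apply', fwdDiff, Pi.sub_apply, ih]

theorem mixedFwdDiff_zero_right (f : ℕ → ℕ → G) (k : ℕ) :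
    mixedFwdDiff f k 0 = Δ_[1] ^[k] (fun i ↦ f i 0) 0 :=
  fwdDiff_iter_apply_apply 1 f k 0 0

theorem mixedFwdDiff_zero_left (f : ℕ → ℕ → G) (l : ℕ) :
    mixedFwdDiff f 0 l = Δ_[1] ^[l] (f 0) 0 := rfl

section PascalRecurrence

variable {p : ℕ → ℕ → G} (hp : ∀ i j, p (i + 1) (j + 1) = p (i + 1) j + p i (j + 1))
include hp

theorem fwdDiff_fwdDiff_iter_succ_of_pascal (k i : ℕ) :
    Δ_[1] (Δ_[1] ^[k + 1] p i) = Δ_[1] ^[k] p i := by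
  induction k generalizing i with
  | zero =>
    funext j
    simp only [zero_add, Function.iterate_one, Function.iterate_zero, id, fwdDiff, Pi.sub_apply, hp]
    abel
  | succ k ih =>
    calc Δ_[1] (Δ_[1] ^[k + 2] p i)
      _ = Δ_[1] (Δ_[1] ^[k + 1] p (i + 1)) - Δ_[1] (Δ_[1] ^[k + 1] p i) := by
        rw [Function.iterate_succ_apply' _ (k + 1)]
        funext j
        simp only [fwdDiff, Pi.sub_apply]
        abel
      _ = Δ_[1] ^[k + 1] p i := by rw [ih, ih, Function.iterate_succ_apply' _ k, fwdDiff]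

theorem mixedFwdDiff_add_add_of_pascal (k l m : ℕ) :
    mixedFwdDiff p (k + m) (l + m) = mixedFwdDiff p k l := by
  induction m with
  | zero => rfl
  | succ m ih =>
    rw [← ih, ← add_assoc, ← add_assoc, mixedFwdDiff, Function.iterate_succ_apply,
      fwdDiff_fwdDiff_iter_succ_of_pascal hp, mixedFwdDiff]

end PascalRecurrence

end FwdDiff

section BinomialMatrix

/-- The lower unitriangular `n × n` matrix of binomial coefficients, the matrix of the binomial
transform. -/
def binomialMatrix (R : Type*) [NatCast R] (n : ℕ) : Matrix (Fin n) (Fin n) R :=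
  of fun i j ↦ ((i : ℕ).choose j : R)

theorem det_binomialMatrix (R : Type*) [CommRing R] (n : ℕ) : (binomialMatrix R n).det = 1 := by
  have lower : (binomialMatrix R n).IsLowerTriangular := fun i j (hij : i < j) ↦ by
    rw [binomialMatrix, of_apply, Nat.choose_eq_zero_of_lt hij, Nat.cast_zero]
  rw [det_of_isLowerTriangular _ lower]
  simp [binomialMatrix]

theorem of_eq_binomialMatrix_mul_mixedFwdDiff_mul {R : Type*} [Ring R] (f : ℕ → ℕ → R) (n : ℕ) :
    (of fun i j : Fin n ↦ f i j) =
      binomialMatrix R n * ((of fun k l : Fin n ↦ mixedFwdDiff f k l) * (binomialMatrix R n)ᵀ) := by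
  ext i j
  calc f i j
    _ = ∑ k : Fin n, (i : ℕ).choose k • Δ_[1] ^[k] f 0 j := by
      simpa using congrFun (eq_sum_fin_choose_smul_fwdDiff_iter f i.2) j
    _ = ∑ k : Fin n, (i : ℕ).choose k • ∑ l : Fin n, (j : ℕ).choose l • mixedFwdDiff f k l :=
      Finset.sum_congr rfl fun k _ ↦ by
        rw [eq_sum_fin_choose_smul_fwdDiff_iter (Δ_[1] ^[k] f 0) j.2]
        rfl
    _ = ∑ k : Fin n, ((i : ℕ).choose k : R) *
        ∑ l : Fin n, mixedFwdDiff f k l * ((j : ℕ).choose l : R) := by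
      simp only [nsmul_eq_mul, (Nat.cast_commute _ (mixedFwdDiff f _ _)).eq]
    _ = _ := by simp only [mul_apply, binomialMatrix, of_apply, transpose_apply]

theorem det_of_eq_det_mixedFwdDiff {R : Type*} [CommRing R] (f : ℕ → ℕ → R) (n : ℕ) :
    (of fun i j : Fin n ↦ f i j).det = (of fun k l : Fin n ↦ mixedFwdDiff f k l).det := by
  rw [of_eq_binomialMatrix_mul_mixedFwdDiff_mul, det_mul, det_mul, det_transpose,
    det_binomialMatrix, one_mul, mul_one]

end BinomialMatrix

theorem det_add_smul_vecMulVec {m R : Type*} [Fintype m] [DecidableEq m] [CommRing R]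
    (M : Matrix m m R) (x : R) (u v : m → R) :
    (M + x • vecMulVec u v).det =
      M.det - x * (fromBlocks M (replicateCol Unit u) (replicateRow Unit v) 0).det := by
  -- `M + x u vᵀ` is a Schur complement in a bordered matrix whose last row is `(-x v, 1)`; the
  -- determinant of the latter is linear in that row.
  let bordered (y z : R) : Matrix (m ⊕ Unit) (m ⊕ Unit) R :=
    fromBlocks M (replicateCol Unit u) (y • replicateRow Unit v) (z • 1)
  have last_row (y z y' z' : R) :
      (bordered y z).updateRow (.inr ()) (bordered y' z' (.inr ())) = bordered y' z' := by
    ext (i | i) (j | j) <;> simp [bordered, updateRow_apply]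
  have last_row_affine : bordered (-x) 1 (.inr ()) =
      bordered 0 1 (.inr ()) + (-x) • bordered 1 0 (.inr ()) := by
    ext (j | j) <;> simp [bordered]
  calc (M + x • vecMulVec u v).det
    _ = (bordered (-x) 1).det := by
      simp only [bordered]
      rw [one_smul, det_fromBlocks_one₂₂, vecMulVec_eq Unit, Matrix.mul_smul, neg_smul,
        sub_neg_eq_add]
    _ = (bordered 0 1).det - x * (bordered 1 0).det := by
      rw [← last_row 0 1 (-x) 1, last_row_affine, det_updateRow_add, det_updateRow_smul, last_row,
        last_row, neg_mul, sub_eq_add_neg]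
    _ = _ := by simp [bordered]

section TriangularConst

variable {m R : Type*} [LinearOrder m]

/-- The `n × n` Toeplitz matrix with first column `a` and first row `b`. The diagonal is
`a 0`, whatever `b 0` is. -/
def toeplitzMatrix (a b : ℕ → R) (n : ℕ) : Matrix (Fin n) (Fin n) R :=
  of fun i j ↦ if j ≤ i then a (i - j) else b (j - i)

/-- The square matrix with entries `b` below, `d` on and `c` above the diagonal. -/
def triangularConst (m : Type*) [LinearOrder m] (b d c : R) : Matrix m m R :=
  of fun i j ↦ if i = j then d else if j < i then b else c

theorem toeplitzMatrix_eq_triangularConst {a b : ℕ → R} {x y : R} (ha : ∀ k, a (k + 1) = x)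
    (hb : ∀ k, b (k + 1) = y) (n : ℕ) :
    toeplitzMatrix a b n = triangularConst (Fin n) x (a 0) y := by
  ext i j
  simp only [toeplitzMatrix, triangularConst, of_apply]
  rcases lt_trichotomy i j with hij | rfl | hji
  · obtain ⟨k, hk⟩ := Nat.exists_eq_add_of_lt hij
    simp [hij.ne, hij.not_ge, hij.not_gt, show (j : ℕ) - i = k + 1 by omega, hb]
  · simp
  · obtain ⟨k, hk⟩ := Nat.exists_eq_add_of_lt hji
    simp [hji.ne', hji, hji.le, show (i : ℕ) - j = k + 1 by omega, ha]

variable [CommRing R]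

theorem triangularConst_add_smul_vecMulVec_one (b d c x : R) :
    triangularConst m b d c + x • vecMulVec 1 1 = triangularConst m (b + x) (d + x) (c + x) := by
  ext i j
  simp only [triangularConst, Matrix.add_apply, Matrix.smul_apply, vecMulVec_apply, of_apply]
  split_ifs <;> simp

variable [Fintype m]

theorem det_triangularConst_zero_left (d c : R) :
    (triangularConst m 0 d c).det = d ^ Fintype.card m := by
  have upper : (triangularConst m 0 d c).IsUpperTriangular := fun i j (hij : j < i) ↦ by
    simp [triangularConst, hij, hij.ne']
  rw [det_of_isUpperTriangular upper]
  simp [triangularConst]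

theorem det_triangularConst_zero_right (b d : R) :
    (triangularConst m b d 0).det = d ^ Fintype.card m := by
  have lower : (triangularConst m b d 0).IsLowerTriangular := fun i j (hij : i < j) ↦ by
    simp [triangularConst, hij.ne, hij.not_gt]
  rw [det_of_isLowerTriangular _ lower]
  simp [triangularConst]

theorem sub_mul_det_triangularConst (b d c : R) :
    (b - c) * (triangularConst m b d c).det =
      b * (d - c) ^ Fintype.card m - c * (d - b) ^ Fintype.card m := by
  have affine := fun x ↦ det_add_smul_vecMulVec (triangularConst m b d c) x 1 1
  simp only [triangularConst_add_smul_vecMulVec_one] at affine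
  have at_b := affine (-b)
  have at_c := affine (-c)
  rw [add_neg_cancel, ← sub_eq_add_neg, ← sub_eq_add_neg, det_triangularConst_zero_left] at at_b
  rw [add_neg_cancel, ← sub_eq_add_neg, ← sub_eq_add_neg, det_triangularConst_zero_right] at at_c
  rw [at_b, at_c]
  ring

end TriangularConst

theorem det_pascalM (α β : ℕ → ℤ) (h₀ : α 0 = β 0) (n : ℕ) :
    (pascalM α β n).det =
      (toeplitzMatrix (fun k ↦ Δ_[1] ^[k] α 0) (fun k ↦ Δ_[1] ^[k] β 0) (n + 1)).det := by
  have column : (fun i ↦ pascalEntry α β i 0) = α := funext fun i ↦ by rw [pascalEntry]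
  have row : pascalEntry α β 0 = β := funext fun j ↦ by cases j <;> simp only [pascalEntry, h₀]
  have shift := mixedFwdDiff_add_add_of_pascal (p := pascalEntry α β) fun i j ↦ by
    rw [pascalEntry]
  rw [pascalM, det_of_eq_det_mixedFwdDiff]
  congr 1
  ext i j
  rw [toeplitzMatrix, of_apply, of_apply]
  split_ifs with hij
  · have below := shift (i - j) 0 j
    rwa [zero_add, Nat.sub_add_cancel hij, mixedFwdDiff_zero_right, column] at below
  · have above := shift 0 (j - i) i
    rwa [zero_add, Nat.sub_add_cancel (le_of_not_ge hij), mixedFwdDiff_zero_left, row] at above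

theorem three_mul_jacobsthalZ (n : ℕ) : 3 * jacobsthalZ n = 2 ^ n - (-1) ^ n := by
  induction n using Nat.twoStepInduction with
  | zero => rfl
  | one => rfl
  | more n ih₀ ih₁ =>
    rw [jacobsthalZ, mul_add, mul_left_comm, ih₀, ih₁]
    ring

/-- Corollary 3.8 (1): for `α_i = 2^(i+1) - 1` and `β_i = 2 - 2^i`,
`det P_{α,β}(n) = J_{n+2}` for every `n ≥ 0`. -/
theorem det_pascal_jacobsthal (n : ℕ) :
    (pascalM (fun i => 2 ^ (i + 1) - 1) (fun i => 2 - 2 ^ i) n).det =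
      jacobsthalZ (n + 2) := by
  have diagonal : Δ_[1] ^[0] (fun i : ℕ ↦ (2 : ℤ) ^ (i + 1) - 1) 0 = 1 := by norm_num
  have row_const : ∀ k, Δ_[1] ^[k + 1] (fun i : ℕ ↦ (2 : ℤ) - 2 ^ i) 0 = -1 := fun k ↦ by
    simpa [sub_eq_neg_add] using fwdDiff_iter_succ_mul_pow_add (-1 : ℤ) 2 2 k 0
  have column_const : ∀ k, Δ_[1] ^[k + 1] (fun i : ℕ ↦ (2 : ℤ) ^ (i + 1) - 1) 0 = 2 := fun k ↦ by
    simpa [pow_succ', sub_eq_add_neg] using fwdDiff_iter_succ_mul_pow_add (2 : ℤ) 2 (-1) k 0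
  rw [det_pascalM _ _ (by norm_num), toeplitzMatrix_eq_triangularConst column_const row_const,
    diagonal]
  have closed_form := sub_mul_det_triangularConst (m := Fin (n + 1)) (2 : ℤ) 1 (-1)
  rw [Fintype.card_fin] at closed_form
  refine mul_left_cancel₀ (three_ne_zero' ℤ) ?_
  calc 3 * (triangularConst (Fin (n + 1)) (2 : ℤ) 1 (-1)).det
    _ = 2 * (1 - -1) ^ (n + 1) - -1 * (1 - 2) ^ (n + 1) := closed_form
    _ = 2 ^ (n + 2) - (-1) ^ (n + 2) := by ring
    _ = 3 * jacobsthalZ (n + 2) := (three_mul_jacobsthalZ (n + 2)).symm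
end

section
/- Let a, b, c be complex numbers and for each positive integer n set T_n = T_n(a,b,c). Then det T_1 = c, det T_2 = c² − ab, and for all n ≥ 3, det T_n = (2c − a − b)·det T_{n−1} − (c − a)(c − b)·det T_{n−2}. -/
/-!
Subtracting the second row of `T_n` from the first, and then the second column from the first,
leaves only the entries `2c - a - b`, `a - c` in the first row and `2c - a - b`, `b - c` in the
first column. Expanding along them gives `T_{n-1}` and `T_{n-2}` as minors, because deleting the
first one or two rows and columns of `T_n` leaves a matrix of the same form.
-/

section Determinant

variable {R : Type*} [CommRing R] {n : ℕ}

theorem det_succ_succ_of_tails_eq_zero (M : Matrix (Fin (n + 2)) (Fin (n + 2)) R)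
    (hrow : ∀ j : Fin n, M 0 j.succ.succ = 0) (hcol : ∀ i : Fin n, M i.succ.succ 0 = 0) :
    M.det = M 0 0 * (M.submatrix Fin.succ Fin.succ).det -
      M 0 1 * M 1 0 * (M.submatrix (Fin.succ ∘ Fin.succ) (Fin.succ ∘ Fin.succ)).det := by
  have hminor : (M.submatrix Fin.succ (Fin.succAbove 1)).det =
      M 1 0 * (M.submatrix (Fin.succ ∘ Fin.succ) (Fin.succ ∘ Fin.succ)).det := by
    rw [Matrix.det_succ_column_zero, Fin.sum_univ_succ]
    simp [hcol, Function.comp_def]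
  rw [Matrix.det_succ_row_zero, Fin.sum_univ_succ, Fin.sum_univ_succ]
  simp [hrow, hminor, mul_assoc, sub_eq_add_neg]

theorem det_succ_succ_of_tails_eq (A : Matrix (Fin (n + 2)) (Fin (n + 2)) R)
    (hrow : ∀ j : Fin n, A 0 j.succ.succ = A 1 j.succ.succ)
    (hcol : ∀ i : Fin n, A i.succ.succ 0 = A i.succ.succ 1) :
    A.det = (A 0 0 - A 1 0 - (A 0 1 - A 1 1)) * (A.submatrix Fin.succ Fin.succ).det -
      (A 0 1 - A 1 1) * (A 1 0 - A 1 1) *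
        (A.submatrix (Fin.succ ∘ Fin.succ) (Fin.succ ∘ Fin.succ)).det := by
  let B := A.updateRow 0 (A 0 + (-1 : R) • A 1)
  let C := B.updateCol 0 fun i => B i 0 + (-1 : R) • B i 1
  have hdet : C.det = A.det :=
    (Matrix.det_updateCol_add_smul_self B Fin.zero_ne_one (-1)).trans
      (Matrix.det_updateRow_add_smul_self A Fin.zero_ne_one (-1))
  have h00 : C 0 0 = A 0 0 - A 1 0 - (A 0 1 - A 1 1) := by simp [C, B, sub_eq_add_neg]
  have h01 : C 0 1 = A 0 1 - A 1 1 := by simp [C, B, sub_eq_add_neg]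
  have h10 : C 1 0 = A 1 0 - A 1 1 := by simp [C, B, sub_eq_add_neg]
  have hrowC (j : Fin n) : C 0 j.succ.succ = 0 := by simp [C, B, hrow]
  have hcolC (i : Fin n) : C i.succ.succ 0 = 0 := by simp [C, B, hcol]
  have hsub : C.submatrix Fin.succ Fin.succ = A.submatrix Fin.succ Fin.succ := by
    ext i j
    simp [C, B]
  have hsub₂ : C.submatrix (Fin.succ ∘ Fin.succ) (Fin.succ ∘ Fin.succ) =
      A.submatrix (Fin.succ ∘ Fin.succ) (Fin.succ ∘ Fin.succ) :=
    congrArg (Matrix.submatrix · Fin.succ Fin.succ) hsub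
  rw [← hdet, det_succ_succ_of_tails_eq_zero C hrowC hcolC, h00, h01, h10, hsub, hsub₂]

end Determinant

/-- The Toeplitz matrix `T_n(a,b,c)` with entries in an arbitrary type; `toeplitz3` is the case
of `ℂ`, definitionally since both compare indices as natural numbers. -/
def tripleToeplitz {α : Type*} (a b c : α) (n : ℕ) : Matrix (Fin n) (Fin n) α :=
  Matrix.of fun i j => if (i : ℕ) = (j : ℕ) then c else if (i : ℕ) < (j : ℕ) then a else b

namespace tripleToeplitz

theorem submatrix_succ {α : Type*} (a b c : α) (n : ℕ) :
    (tripleToeplitz a b c (n + 1)).submatrix Fin.succ Fin.succ = tripleToeplitz a b c n := by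
  ext i j
  simp [tripleToeplitz]

variable {R : Type*} [CommRing R] (a b c : R)

theorem det_one : (tripleToeplitz a b c 1).det = c := by
  simp [tripleToeplitz]

theorem det_two : (tripleToeplitz a b c 2).det = c ^ 2 - a * b := by
  simp [Matrix.det_fin_two, tripleToeplitz, sq]

theorem det_add_two (n : ℕ) :
    (tripleToeplitz a b c (n + 2)).det =
      (2 * c - a - b) * (tripleToeplitz a b c (n + 1)).det -
        (c - a) * (c - b) * (tripleToeplitz a b c n).det := by
  have hrow (j : Fin n) : tripleToeplitz a b c (n + 2) 0 j.succ.succ =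
      tripleToeplitz a b c (n + 2) 1 j.succ.succ := by
    simp [tripleToeplitz, -Fin.val_fin_lt]
  have hcol (i : Fin n) : tripleToeplitz a b c (n + 2) i.succ.succ 0 =
      tripleToeplitz a b c (n + 2) i.succ.succ 1 := by
    simp [tripleToeplitz]
  have hsub : (tripleToeplitz a b c (n + 2)).submatrix (Fin.succ ∘ Fin.succ)
      (Fin.succ ∘ Fin.succ) = tripleToeplitz a b c n := by
    rw [← Matrix.submatrix_submatrix, submatrix_succ, submatrix_succ]
  rw [det_succ_succ_of_tails_eq _ hrow hcol, submatrix_succ, hsub]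
  have h00 : tripleToeplitz a b c (n + 2) 0 0 = c := by simp [tripleToeplitz]
  have h01 : tripleToeplitz a b c (n + 2) 0 1 = a := by simp [tripleToeplitz]
  have h10 : tripleToeplitz a b c (n + 2) 1 0 = b := by simp [tripleToeplitz]
  have h11 : tripleToeplitz a b c (n + 2) 1 1 = c := by simp [tripleToeplitz]
  rw [h00, h01, h10, h11]
  ring

end tripleToeplitz

theorem det_toeplitz3_recurrence_general {R : Type*} [CommRing R] (a b c : R) :
    (tripleToeplitz a b c 1).det = c ∧
    (tripleToeplitz a b c 2).det = c ^ 2 - a * b ∧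
    ∀ n : ℕ, 2 ≤ n →
      (tripleToeplitz a b c n).det =
        (2 * c - a - b) * (tripleToeplitz a b c (n - 1)).det -
          (c - a) * (c - b) * (tripleToeplitz a b c (n - 2)).det := by
  refine ⟨tripleToeplitz.det_one a b c, tripleToeplitz.det_two a b c, fun n hn => ?_⟩
  obtain ⟨m, rfl⟩ := Nat.exists_eq_add_of_le' hn
  exact tripleToeplitz.det_add_two a b c m

/-- Lemma 2.3 (recursive part): `det T_1 = c`, `det T_2 = c² - ab`, and for all `n ≥ 3`,
`det T_n = (2c - a - b) det T_{n-1} - (c - a)(c - b) det T_{n-2}`. -/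
theorem det_toeplitz3_recurrence (a b c : ℂ) :
    (toeplitz3 a b c 1).det = c ∧
    (toeplitz3 a b c 2).det = c ^ 2 - a * b ∧
    ∀ n : ℕ, 3 ≤ n →
      (toeplitz3 a b c n).det =
        (2 * c - a - b) * (toeplitz3 a b c (n - 1)).det -
          (c - a) * (c - b) * (toeplitz3 a b c (n - 2)).det := by
  obtain ⟨h_one, h_two, h_rec⟩ := det_toeplitz3_recurrence_general a b c
  exact ⟨h_one, h_two, fun n hn => h_rec n (Nat.le_of_succ_le hn)⟩
end

section
/- Let a, b, r be integers with r ≥ 1 and let G = G^{(a,b,r,1)}. Then: (1) the binomial transform Ǧ satisfies Ǧ_0 = a, Ǧ_1 = a + b, and Ǧ_i = (r+2)·Ǧ_{i−1} − r·Ǧ_{i−2} for all i ≥ 2; (2) the binomial transform (G̃)̌ of the sequence G̃ (where G̃_i = (−1)^i·G_i) satisfies (G̃)̌_0 = a, (G̃)̌_1 = a − b, and (G̃)̌_i = (2−r)·(G̃)̌_{i−1} + r·(G̃)̌_{i−2} for all i ≥ 2. -/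
/-- The binomial transform: `α̌_i = Σ_{k=0}^{i} C(i,k) * α_k`. -/
def btrans (α : ℕ → ℤ) (i : ℕ) : ℤ :=
  ∑ k ∈ Finset.range (i + 1), (i.choose k : ℤ) * α k

/-! By Pascal's rule the binomial transform intertwines the shift `E` with `E - 1`. Hence a sequence
annihilated by `E ^ 2 - p * E - q` has a transform annihilated by `(E - 1) ^ 2 - p * (E - 1) - q`.
For `gib a b r` we have `(p, q) = (r, 1)`; alternating signs replace this by `(-r, 1)`. -/

section SecondOrderRecurrence

variable {R : Type*} [CommSemiring R]

/-- The second-order linear recurrence `u (n + 2) = p * u (n + 1) + q * u n`. As always in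
`LinearRecurrence`, the coefficients are listed from the lowest-order term up. -/
def secondOrderRec (p q : R) : LinearRecurrence R where
  order := 2
  coeffs := ![q, p]

theorem isSolution_secondOrderRec_iff {p q : R} {u : ℕ → R} :
    (secondOrderRec p q).IsSolution u ↔ ∀ n, u (n + 2) = p * u (n + 1) + q * u n := by
  refine forall_congr' fun n ↦ ?_
  change u (n + 2) = ∑ i : Fin 2, ![q, p] i * u (n + i) ↔ _
  simp [Fin.sum_univ_two, add_comm]

theorem isSolution_pow_mul {p q : R} {u : ℕ → R} (hu : (secondOrderRec p q).IsSolution u) (c : R) :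
    (secondOrderRec (c * p) (c ^ 2 * q)).IsSolution (fun n ↦ c ^ n * u n) := by
  rw [isSolution_secondOrderRec_iff] at hu ⊢
  intro n
  rw [hu]
  ring

end SecondOrderRecurrence

section BinomialTransform

variable (α β : ℕ → ℤ)

theorem btrans_zero : btrans α 0 = α 0 := by
  simp [btrans]

theorem btrans_one : btrans α 1 = α 0 + α 1 := by
  simp [btrans, Finset.sum_range_succ]

theorem btrans_add (n : ℕ) : btrans (α + β) n = btrans α n + btrans β n := by
  simp only [btrans, Pi.add_apply, mul_add, Finset.sum_add_distrib]

theorem btrans_smul (c : ℤ) (n : ℕ) : btrans (c • α) n = c * btrans α n := by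
  simp only [btrans, Pi.smul_apply, smul_eq_mul, Finset.mul_sum, mul_left_comm]

theorem btrans_succ (n : ℕ) : btrans α (n + 1) = btrans α n + btrans (fun k ↦ α (k + 1)) n :=
  Finset.sum_choose_succ_mul (fun k _ ↦ α k) n

variable {α}

theorem isSolution_btrans {p q : ℤ} (hα : (secondOrderRec p q).IsSolution α) :
    (secondOrderRec (p + 2) (q - p - 1)).IsSolution (btrans α) := by
  rw [isSolution_secondOrderRec_iff] at hα ⊢
  intro n
  have shift_one : btrans (fun k ↦ α (k + 1)) n = btrans α (n + 1) - btrans α n :=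
    eq_sub_of_add_eq' (btrans_succ α n).symm
  have shift_two : btrans (fun k ↦ α (k + 2)) n =
      p * btrans (fun k ↦ α (k + 1)) n + q * btrans α n := by
    rw [← btrans_smul, ← btrans_smul, ← btrans_add]
    exact congrArg (btrans · n) (funext hα)
  calc btrans α (n + 2)
      = btrans α (n + 1) + (btrans (fun k ↦ α (k + 1)) n + btrans (fun k ↦ α (k + 2)) n) := by
        rw [btrans_succ α (n + 1), btrans_succ (fun k ↦ α (k + 1)) n]
    _ = (p + 2) * btrans α (n + 1) + (q - p - 1) * btrans α n := by
        rw [shift_two, shift_one]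
        ring

end BinomialTransform

section Gibonacci

variable (a b r : ℤ)

theorem isSolution_gib : (secondOrderRec r 1).IsSolution (gib a b r) :=
  isSolution_secondOrderRec_iff.mpr fun n ↦ by rw [gib, one_mul]

theorem isSolution_btrans_gib : (secondOrderRec (r + 2) (-r)).IsSolution (btrans (gib a b r)) := by
  convert isSolution_btrans (isSolution_gib a b r) using 2
  ring

theorem isSolution_btrans_neg_one_pow_mul_gib :
    (secondOrderRec (2 - r) r).IsSolution (btrans fun i ↦ (-1) ^ i * gib a b r i) := by
  convert isSolution_btrans (isSolution_pow_mul (isSolution_gib a b r) (-1)) using 2 <;> ring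

end Gibonacci

theorem btrans_gib_recurrence_general (a b r : ℤ) :
    (btrans (gib a b r) 0 = a ∧ btrans (gib a b r) 1 = a + b ∧
      ∀ i : ℕ, 2 ≤ i →
        btrans (gib a b r) i =
          (r + 2) * btrans (gib a b r) (i - 1) - r * btrans (gib a b r) (i - 2)) ∧
    (btrans (fun i => (-1) ^ i * gib a b r i) 0 = a ∧
      btrans (fun i => (-1) ^ i * gib a b r i) 1 = a - b ∧
      ∀ i : ℕ, 2 ≤ i →
        btrans (fun i => (-1) ^ i * gib a b r i) i =
          (2 - r) * btrans (fun i => (-1) ^ i * gib a b r i) (i - 1) +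
            r * btrans (fun i => (-1) ^ i * gib a b r i) (i - 2)) := by
  have transform := isSolution_secondOrderRec_iff.mp (isSolution_btrans_gib a b r)
  have alternating := isSolution_secondOrderRec_iff.mp (isSolution_btrans_neg_one_pow_mul_gib a b r)
  refine ⟨⟨btrans_zero _, btrans_one _, fun i hi ↦ ?_⟩, ?_, ?_, fun i hi ↦ ?_⟩
  · obtain ⟨n, rfl⟩ := Nat.exists_eq_add_of_le' hi
    simpa [sub_eq_add_neg] using transform n
  · simp [btrans_zero, gib]
  · simp [btrans_one, gib, sub_eq_add_neg]
  · obtain ⟨n, rfl⟩ := Nat.exists_eq_add_of_le' hi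
    exact alternating n

/-- Lemma 2.5: for `G = G^{(a,b,r,1)}` with `r ≥ 1`:
(1) `Ǧ_0 = a`, `Ǧ_1 = a + b` and `Ǧ_i = (r+2) Ǧ_{i-1} - r Ǧ_{i-2}` for `i ≥ 2`;
(2) `(G̃)̌_0 = a`, `(G̃)̌_1 = a - b` and `(G̃)̌_i = (2-r) (G̃)̌_{i-1} + r (G̃)̌_{i-2}`
for `i ≥ 2`. -/
theorem btrans_gib_recurrence (a b r : ℤ) (hr : 1 ≤ r) :
    (btrans (gib a b r) 0 = a ∧ btrans (gib a b r) 1 = a + b ∧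
      ∀ i : ℕ, 2 ≤ i →
        btrans (gib a b r) i =
          (r + 2) * btrans (gib a b r) (i - 1) - r * btrans (gib a b r) (i - 2)) ∧
    (btrans (fun i => (-1) ^ i * gib a b r i) 0 = a ∧
      btrans (fun i => (-1) ^ i * gib a b r i) 1 = a - b ∧
      ∀ i : ℕ, 2 ≤ i →
        btrans (fun i => (-1) ^ i * gib a b r i) i =
          (2 - r) * btrans (fun i => (-1) ^ i * gib a b r i) (i - 1) +
            r * btrans (fun i => (-1) ^ i * gib a b r i) (i - 2)) :=
  btrans_gib_recurrence_general a b r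
end
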